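/- (Corollary 3, polynomial/exponential scaling.) Consider a sequence of random-design problems as in the context. Suppose there exist constants c₁, c₂ > 0 with c₁ + c₂ < 1 and a constant K such that s(n) ≤ K n^{c₁} and p(n) ≤ K exp(n^{c₂}) for all n. If the regularization sequence λ_n > 0 satisfies λ_n → 0, n λ_n² / log(p − s) → +∞, and (1/ρ_n)[ λ_n + √(log s / n) ] → 0, then the probability that property R(X, β*, W, λ_n) holds converges to 1 as n → ∞. -/

import Mathlib

/-!
The proof is the primal-dual witness argument. Write `M` for the active columns of `X` (those in
`S`), `z` for the sign vector of `βstar` on `S` and `G = MᵀM`. The candidate solution solves the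
Lasso optimality conditions on `S` exactly and vanishes off `S`; its error is
`d = G⁻¹ Mᵀ W - n λ G⁻¹ z`. By convexity (`propR_of_kkt`) it is optimal with the right signs as soon
as `|d i| < ρ` on `S` and the residual `r = W - M d` has correlation at most `n λ` with every
inactive column (`propR_det`). Everything is decided on the event that `G` has smallest eigenvalue
at least `c n`, where `c = Cmin / 64`.

* Conditioning. The event has probability tending to one by a union bound over a grid of
  `(2m + 1) ^ s` points of `[-1, 1] ^ s`, with `m` proportional to `s`. A chi-square lower tail
  bound costs `(e / 3) ^ n` for each grid point, which beats the entropy because `s log s = o(n)`;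
  the columns have squared norm at most `4n`, so the grid controls all directions
  (`minEig_of_grid`, `prob_minEig`).
* Noise. Given `X`, the coordinate `(G⁻¹ Mᵀ W) i` is Gaussian with variance at most `σ² / (c n)`
  (`prob_noise`), and `log s = o(n ρ²)`.
* Bias. A bound on `‖G⁻¹ z‖_∞` of order `1 / n` comes from a leave-one-out identity
  (`leave_one_out`): with `q` the `i`-th row of `Σ_SS⁻¹`, so that `q i ≥ 1`, the coordinate
  `(G⁻¹ z) i` is at most `|q ⬝ᵥ z - (M q) ⬝ᵥ (N (NᵀN)⁻¹ z')| / (c n)` in absolute value, where `N`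
  is `M` without column `i` and `z'` is `z` without coordinate `i`. Here `|q ⬝ᵥ z| ≤ Dmax`, and
  since `Σ_SS q = e_i` the Gaussian vector `M q` is independent of `N`, so the second term is at
  most `1` with high probability (`prob_loo`), as `s log s = o(n)`.
* Dual feasibility. For `j` outside `S` let `θ` be the `j`-th row of `Σ_{SᶜS} Σ_SS⁻¹`. As
  `Mᵀ r = n λ z`, the correlation of column `X_j` with `r` is `n λ θ ⬝ᵥ z`, of absolute value at
  most `n λ (1 - ε)`, plus `(X_j - M θ) ⬝ᵥ r`. The vector `X_j - M θ` is independent of `(M, W)`,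
  and `r` has squared norm at most `4 n σ² + (n λ)² s / (c n)`, so the last term exceeds `n λ ε`
  with probability at most `2 exp (-2 log (p - s))` for large `n` (`prob_dual`). This uses
  `log (p - s) = o(n λ²)` and `s log (p - s) = o(n)`, the latter because `c₁ + c₂ < 1`.

The resulting finite-sample bound is `prob_failure`.
-/

open MeasureTheory ProbabilityTheory Matrix Filter

/-- The sign function, `sgn t ∈ {-1, 0, 1}`. -/
noncomputable def sgn (t : ℝ) : ℝ := if 0 < t then 1 else if t < 0 then -1 else 0

/-- The Lasso objective `(1/(2n)) ‖Y - Xβ‖₂² + λ ‖β‖₁`. -/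
noncomputable def lassoObj {n p : ℕ} (X : Matrix (Fin n) (Fin p) ℝ)
    (Y : Fin n → ℝ) (lam : ℝ) (β : Fin p → ℝ) : ℝ :=
  (1 / (2 * (n : ℝ))) * ∑ k, (Y k - ∑ j, X k j * β j) ^ 2 + lam * ∑ j, |β j|

/-- Property `R(X, β*, w, λ)`: some optimal solution of the Lasso with observation
`Y = X β* + w` has the same (componentwise) sign pattern as `β*`. -/
noncomputable def PropR {n p : ℕ} (X : Matrix (Fin n) (Fin p) ℝ) (βs : Fin p → ℝ)
    (w : Fin n → ℝ) (lam : ℝ) : Prop :=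
  ∃ βh : Fin p → ℝ,
    (∀ β : Fin p → ℝ,
      lassoObj X (fun k => (∑ j, X k j * βs j) + w k) lam βh ≤
        lassoObj X (fun k => (∑ j, X k j * βs j) + w k) lam β) ∧
    ∀ i, sgn (βh i) = sgn (βs i)

/-- The standard Gaussian measure on `ι → ℝ`: i.i.d. standard normal coordinates. -/
noncomputable def stdGaussian (ι : Type*) [Fintype ι] : Measure (ι → ℝ) :=
  Measure.pi (fun _ : ι => gaussianReal 0 1)

/-- `μ` is the law of a centered Gaussian vector with covariance matrix `C`. -/
def IsCenteredGaussianCov {ι : Type*} [Fintype ι] [DecidableEq ι]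
    (μ : Measure (ι → ℝ)) (C : Matrix ι ι ℝ) : Prop :=
  ∃ A : Matrix ι ι ℝ, A * Aᵀ = C ∧ μ = (stdGaussian ι).map (fun g => A.mulVec g)

/-- The law of `X : Ω → Fin n → ι → ℝ` is that of `n` i.i.d. rows, each centered Gaussian
with covariance `C`. -/
def HasIIDGaussianRows {Ω : Type*} [MeasurableSpace Ω] (P : Measure Ω)
    {n : ℕ} {ι : Type*} [Fintype ι] [DecidableEq ι]
    (X : Ω → Fin n → ι → ℝ) (C : Matrix ι ι ℝ) : Prop :=
  ∃ ρ : Measure (ι → ℝ), IsCenteredGaussianCov ρ C ∧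
    Measure.map X P = Measure.pi (fun _ : Fin n => ρ)

/-- The submatrix `Σ_{SS}` of a `p × p` matrix. -/
def subSS {p : ℕ} (Sig : Matrix (Fin p) (Fin p) ℝ) (S : Finset (Fin p)) :
    Matrix {i : Fin p // i ∈ S} {i : Fin p // i ∈ S} ℝ :=
  Matrix.of fun i j => Sig i.1 j.1

/-- The submatrix `Σ_{S^c S}` of a `p × p` matrix. -/
def subScS {p : ℕ} (Sig : Matrix (Fin p) (Fin p) ℝ) (S : Finset (Fin p)) :
    Matrix {i : Fin p // i ∉ S} {i : Fin p // i ∈ S} ℝ :=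
  Matrix.of fun i j => Sig i.1 j.1

/-! ### The primal-dual witness -/

lemma sgn_add_eq {a d : ℝ} (h : |d| < |a|) : sgn (a + d) = sgn a := by
  unfold sgn
  rcases lt_trichotomy a 0 with ha | ha | ha
  · rw [abs_of_neg ha, abs_lt] at h
    rw [if_neg (by linarith), if_pos (by linarith), if_neg (by linarith), if_pos ha]
  · subst ha
    simp at h
    linarith [abs_nonneg d]
  · rw [abs_of_pos ha, abs_lt] at h
    rw [if_pos (by linarith), if_pos ha]

lemma sgn_mul_self_eq (a : ℝ) : sgn a * a = |a| := by
  unfold sgn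
  rcases lt_trichotomy a 0 with ha | ha | ha
  · rw [if_neg (by linarith), if_pos ha, abs_of_neg ha]; ring
  · simp [ha]
  · rw [if_pos ha, abs_of_pos ha]; ring

lemma abs_sgn_le (a : ℝ) : |sgn a| ≤ 1 := by
  unfold sgn
  split_ifs <;> simp

lemma sgn_sq {a : ℝ} (ha : a ≠ 0) : sgn a ^ 2 = 1 := by
  unfold sgn
  rcases lt_or_gt_of_ne ha with h | h
  · rw [if_neg (by linarith), if_pos h]; norm_num
  · rw [if_pos h]; norm_num

/-- The subgradient conditions for the Lasso at `βs + D`: if the correlations of the residual with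
the columns are `n λ sgn(βs)` on the support and at most `n λ` off it, and the perturbation `D` is
too small to change a sign, then `PropR` holds. -/
lemma propR_of_kkt {n p : ℕ} (hn : 0 < n) (X : Matrix (Fin n) (Fin p) ℝ) (βs : Fin p → ℝ)
    (w : Fin n → ℝ) (lam : ℝ) (hlam : 0 ≤ lam) (D : Fin p → ℝ)
    (h0 : ∀ i, βs i = 0 → D i = 0) (h1 : ∀ i, βs i ≠ 0 → |D i| < |βs i|)
    (h2 : ∀ i, βs i ≠ 0 → ∑ k, X k i * (w k - ∑ j, X k j * D j) = n * lam * sgn (βs i))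
    (h3 : ∀ i, βs i = 0 → |∑ k, X k i * (w k - ∑ j, X k j * D j)| ≤ n * lam) :
    PropR X βs w lam := by
  have hn' : (0 : ℝ) < n := by exact_mod_cast hn
  have hsg : ∀ i, sgn (βs i + D i) = sgn (βs i) := by
    intro i
    by_cases hi : βs i = 0
    · rw [h0 i hi, add_zero]
    · exact sgn_add_eq (h1 i hi)
  refine ⟨fun i => βs i + D i, ?_, hsg⟩
  intro β
  set r : Fin n → ℝ := fun k => w k - ∑ j, X k j * D j with hr
  set δ : Fin p → ℝ := fun i => β i - (βs i + D i) with hδ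
  set g : Fin p → ℝ := fun i => ∑ k, X k i * r k with hg
  have e1 : ∀ k, (∑ j, X k j * βs j) + w k - ∑ j, X k j * (βs j + D j) = r k := by
    intro k
    simp only [hr, mul_add, Finset.sum_add_distrib]; ring
  have e2 : ∀ k, (∑ j, X k j * βs j) + w k - ∑ j, X k j * β j = r k - ∑ j, X k j * δ j := by
    intro k
    simp only [hr, hδ, mul_add, mul_sub, Finset.sum_add_distrib, Finset.sum_sub_distrib]; ring
  unfold lassoObj
  simp only [e1, e2]
  have e3 : ∑ k, r k * ∑ j, X k j * δ j = ∑ j, δ j * g j := by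
    simp only [hg, Finset.mul_sum]
    rw [Finset.sum_comm]
    refine Finset.sum_congr rfl fun j _ => Finset.sum_congr rfl fun k _ => by ring
  have e4 : ∑ k, (r k) ^ 2 - 2 * ∑ j, δ j * g j ≤ ∑ k, (r k - ∑ j, X k j * δ j) ^ 2 := by
    rw [← e3, Finset.mul_sum, ← Finset.sum_sub_distrib]
    refine Finset.sum_le_sum fun k _ => ?_
    nlinarith [sq_nonneg (∑ j, X k j * δ j)]
  have e5 : ∀ i, n * lam * |βs i + D i| + δ i * g i ≤ n * lam * |β i| := by
    intro i
    have hb : β i = βs i + D i + δ i := by simp [hδ]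
    by_cases hi : βs i = 0
    · rw [hb, h0 i hi, hi]
      have := h3 i hi
      simp only [add_zero, zero_add, abs_zero, mul_zero]
      calc δ i * g i ≤ |δ i| * |g i| := by rw [← abs_mul]; exact le_abs_self _
        _ ≤ |δ i| * (n * lam) := by gcongr
        _ = _ := by ring
    · have : g i = n * lam * sgn (βs i) := h2 i hi
      rw [this, ← sgn_mul_self_eq, hsg, hb]
      have h4 : sgn (βs i) * (βs i + D i + δ i) ≤ |βs i + D i + δ i| := by
        calc _ ≤ |sgn (βs i)| * |βs i + D i + δ i| := by rw [← abs_mul]; exact le_abs_self _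
          _ ≤ 1 * |βs i + D i + δ i| := by gcongr; exact abs_sgn_le _
          _ = _ := one_mul _
      have := mul_le_mul_of_nonneg_left h4 (mul_nonneg hn'.le hlam)
      linarith
  have e6 : n * (lam * ∑ i, |βs i + D i|) + ∑ i, δ i * g i ≤ n * (lam * ∑ i, |β i|) := by
    have := Finset.sum_le_sum fun i (_ : i ∈ Finset.univ) => e5 i
    simp only [Finset.sum_add_distrib, ← Finset.mul_sum] at this
    linarith
  have key : ∀ a b : ℝ, 1 / (2 * (n : ℝ)) * a + b = (a / 2 + n * b) / n := by
    intro a b; field_simp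
  rw [key, key]
  gcongr ?_ / _
  linarith

/-! ### Least squares on the support -/

/-- Extension by zero of a vector indexed by a subtype. -/
noncomputable def extZ {α : Type*} {Q : α → Prop} (u : {j // Q j} → ℝ) : α → ℝ :=
  open Classical in fun j => if h : Q j then u ⟨j, h⟩ else 0

lemma extZ_of {α : Type*} {Q : α → Prop} (u : {j // Q j} → ℝ) {j : α} (h : Q j) :
    extZ u j = u ⟨j, h⟩ := by simp [extZ, h]

lemma extZ_not {α : Type*} {Q : α → Prop} (u : {j // Q j} → ℝ) {j : α} (h : ¬ Q j) :
    extZ u j = 0 := by simp [extZ, h]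

lemma dot_extZ {α : Type*} [Fintype α] {Q : α → Prop} [Fintype {j // Q j}] (u : {j // Q j} → ℝ)
    (f : α → ℝ) : f ⬝ᵥ extZ u = (fun j : {j // Q j} => f j.1) ⬝ᵥ u := by
  classical
  unfold dotProduct
  rw [← Fintype.sum_subtype_add_sum_subtype Q]
  have h1 : ∑ i : {x // ¬ Q x}, f i.1 * extZ u i.1 = 0 :=
    Finset.sum_eq_zero fun i _ => by rw [extZ_not u i.2, mul_zero]
  rw [h1, add_zero]
  have h2 : ∀ i : {x // Q x}, f i.1 * extZ u i.1 = f i.1 * u i := fun i => by rw [extZ_of u i.2]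
  simp only [h2]
  exact Finset.sum_congr (by ext; simp) fun _ _ => rfl

lemma extZ_dot {α : Type*} [Fintype α] {Q : α → Prop} [Fintype {j // Q j}] (u : {j // Q j} → ℝ)
    (f : α → ℝ) : extZ u ⬝ᵥ f = u ⬝ᵥ (fun j : {j // Q j} => f j.1) := by
  rw [dotProduct_comm, dot_extZ, dotProduct_comm]

lemma extZ_dot_self {α : Type*} [Fintype α] {Q : α → Prop} [Fintype {j // Q j}]
    (u : {j // Q j} → ℝ) : extZ u ⬝ᵥ extZ u = u ⬝ᵥ u := by
  rw [dot_extZ]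
  congr 1
  ext j
  exact extZ_of u j.2

lemma mulVec_extZ {α β : Type*} [Fintype α] {Q : α → Prop} [Fintype {j // Q j}]
    (M : Matrix β α ℝ) (u : {j // Q j} → ℝ) :
    M *ᵥ extZ u = (M.submatrix id (Subtype.val : {j // Q j} → α)) *ᵥ u := by
  ext k
  exact dot_extZ u (M k)

lemma dot_sq_le {ι : Type*} [Fintype ι] (x y : ι → ℝ) :
    (x ⬝ᵥ y) ^ 2 ≤ (x ⬝ᵥ x) * (y ⬝ᵥ y) := by
  have := Finset.sum_mul_sq_le_sq_mul_sq Finset.univ x y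
  simpa [dotProduct, sq] using this

lemma dot_self_nonneg {ι : Type*} [Fintype ι] (x : ι → ℝ) : 0 ≤ x ⬝ᵥ x :=
  Finset.sum_nonneg fun i _ => mul_self_nonneg _

lemma sq_le_dot_self {ι : Type*} [Fintype ι] (x : ι → ℝ) (i : ι) : x i ^ 2 ≤ x ⬝ᵥ x := by
  rw [sq]
  exact Finset.single_le_sum (f := fun j => x j * x j) (fun _ _ => mul_self_nonneg _)
    (Finset.mem_univ i)

/-- The Gram matrix `MᵀM` has smallest eigenvalue at least `c`. -/
def MinEig {ι κ : Type*} [Fintype ι] [Fintype κ] (M : Matrix ι κ ℝ) (c : ℝ) : Prop :=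
  ∀ u : κ → ℝ, c * (u ⬝ᵥ u) ≤ (M *ᵥ u) ⬝ᵥ (M *ᵥ u)

/-- The solution `(MᵀM)⁻¹ z` of the normal equations `MᵀM x = z` (meaningful when `MᵀM` is
invertible). -/
noncomputable def lsSol {ι κ : Type*} [Fintype ι] [Fintype κ] [DecidableEq κ]
    (M : Matrix ι κ ℝ) (z : κ → ℝ) : κ → ℝ := (Mᵀ * M)⁻¹ *ᵥ z

section
variable {ι κ : Type*} [Fintype ι] [Fintype κ]

lemma mulVec_dot_mulVec (M : Matrix ι κ ℝ) (a b : κ → ℝ) :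
    (M *ᵥ a) ⬝ᵥ (M *ᵥ b) = (Mᵀ *ᵥ (M *ᵥ a)) ⬝ᵥ b := by
  rw [Matrix.dotProduct_mulVec, Matrix.mulVec_transpose]

lemma MinEig.submatrix {M : Matrix ι κ ℝ} {c : ℝ} (hM : MinEig M c) (Q : κ → Prop)
    [Fintype {j // Q j}] : MinEig (M.submatrix id (Subtype.val : {j // Q j} → κ)) c := by
  intro u
  have := hM (extZ u)
  rwa [extZ_dot_self, mulVec_extZ] at this

variable [DecidableEq κ]

lemma normal_eq {M : Matrix ι κ ℝ} {c : ℝ} (hc : 0 < c) (hM : MinEig M c) (z : κ → ℝ) :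
    Mᵀ *ᵥ (M *ᵥ lsSol M z) = z := by
  have hdet : IsUnit (Mᵀ * M).det := by
    rw [isUnit_iff_ne_zero]
    intro h0
    obtain ⟨v, hv, hv0⟩ := Matrix.exists_mulVec_eq_zero_iff.mpr h0
    have h1 := hM v
    rw [mulVec_dot_mulVec, Matrix.mulVec_mulVec, hv0, zero_dotProduct] at h1
    have h2 : v ⬝ᵥ v = 0 := le_antisymm (by nlinarith) (dot_self_nonneg v)
    exact hv (dotProduct_self_eq_zero.mp h2)
  unfold lsSol
  rw [Matrix.mulVec_mulVec, Matrix.mulVec_mulVec, Matrix.mul_nonsing_inv _ hdet, Matrix.one_mulVec]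

lemma lsSol_dot {M : Matrix ι κ ℝ} {c : ℝ} (hc : 0 < c) (hM : MinEig M c) (z a : κ → ℝ) :
    (M *ᵥ lsSol M z) ⬝ᵥ (M *ᵥ a) = z ⬝ᵥ a := by
  rw [mulVec_dot_mulVec, normal_eq hc hM]

lemma lsSol_energy {M : Matrix ι κ ℝ} {c : ℝ} (hc : 0 < c) (hM : MinEig M c) (z : κ → ℝ) :
    (M *ᵥ lsSol M z) ⬝ᵥ (M *ᵥ lsSol M z) ≤ z ⬝ᵥ z / c := by
  have h1 := hM (lsSol M z)
  have h2 := lsSol_dot hc hM z (lsSol M z)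
  have h3 := dot_sq_le z (lsSol M z)
  rw [h2] at h1 ⊢
  rw [le_div_iff₀ hc]
  have h5 := dot_self_nonneg z
  have h6 : 0 ≤ z ⬝ᵥ lsSol M z := le_trans (mul_nonneg hc.le (dot_self_nonneg _)) h1
  by_contra hlt
  push Not at hlt
  have h7 : 0 < z ⬝ᵥ lsSol M z := by
    rcases h6.lt_or_eq with h | h
    · exact h
    · rw [← h] at hlt; linarith
  have h8 : c * (z ⬝ᵥ lsSol M z) ^ 2 ≤ (z ⬝ᵥ z) * (z ⬝ᵥ lsSol M z) := by
    calc c * (z ⬝ᵥ lsSol M z) ^ 2 ≤ c * ((z ⬝ᵥ z) * (lsSol M z ⬝ᵥ lsSol M z)) := by gcongr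
      _ = (z ⬝ᵥ z) * (c * (lsSol M z ⬝ᵥ lsSol M z)) := by ring
      _ ≤ _ := by gcongr
  nlinarith

/-- The residual of the least-squares fit of `w` is orthogonal to the range of `M`, so its norm and
that of the fitted part add up. -/
lemma residual_energy {M : Matrix ι κ ℝ} {c : ℝ} (hc : 0 < c) (hM : MinEig M c) (w : ι → ℝ)
    (z : κ → ℝ) :
    (w - M *ᵥ (lsSol M (Mᵀ *ᵥ w) - lsSol M z)) ⬝ᵥ (w - M *ᵥ (lsSol M (Mᵀ *ᵥ w) - lsSol M z))
      ≤ w ⬝ᵥ w + z ⬝ᵥ z / c := by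
  set f := M *ᵥ lsSol M (Mᵀ *ᵥ w) with hf
  set g := M *ᵥ lsSol M z with hg
  have e : w - M *ᵥ (lsSol M (Mᵀ *ᵥ w) - lsSol M z) = w - f + g := by
    rw [Matrix.mulVec_sub]; abel
  have h1 : f ⬝ᵥ f = w ⬝ᵥ f := by
    conv_lhs => rw [hf, lsSol_dot hc hM]
    rw [hf, Matrix.dotProduct_mulVec, Matrix.mulVec_transpose]
  have h2 : f ⬝ᵥ g = w ⬝ᵥ g := by
    rw [hf, hg, lsSol_dot hc hM, Matrix.dotProduct_mulVec, Matrix.mulVec_transpose]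
  have h3 := lsSol_energy hc hM z
  rw [e]
  simp only [add_dotProduct, dotProduct_add, sub_dotProduct, dotProduct_sub]
  rw [dotProduct_comm g w, dotProduct_comm g f, dotProduct_comm f w]
  have := dot_self_nonneg f
  linarith

lemma residual_normal {M : Matrix ι κ ℝ} {c : ℝ} (hc : 0 < c) (hM : MinEig M c) (w : ι → ℝ)
    (z : κ → ℝ) : Mᵀ *ᵥ (w - M *ᵥ (lsSol M (Mᵀ *ᵥ w) - lsSol M z)) = z := by
  rw [Matrix.mulVec_sub, Matrix.mulVec_sub, Matrix.mulVec_sub, normal_eq hc hM, normal_eq hc hM]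
  abel

/-- By symmetry of the Gram matrix, a coordinate of the least-squares fit of `w` is a linear
functional of `w` whose coefficient vector is `M (MᵀM)⁻¹ e_i`. -/
lemma lsSol_transpose_apply (M : Matrix ι κ ℝ) {c : ℝ} (hc : 0 < c) (hM : MinEig M c) (w : ι → ℝ)
    (i : κ) : lsSol M (Mᵀ *ᵥ w) i = w ⬝ᵥ (M *ᵥ lsSol M (Pi.single i 1)) := by
  have h := lsSol_dot hc hM (Pi.single i 1) (lsSol M (Mᵀ *ᵥ w))
  rw [single_one_dotProduct, dotProduct_comm, lsSol_dot hc hM] at h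
  rw [← h, Matrix.dotProduct_mulVec, Matrix.mulVec_transpose]

/-- Leave-one-out control of a coordinate of `(MᵀM)⁻¹ z`: `N` is `M` without column `i`, and `q` is
any test vector with `q i ≥ 1`. The vectors `(MᵀM)⁻¹ z` and `(NᵀN)⁻¹ z` (extended by zero) differ by
a multiple of `(MᵀM)⁻¹ e_i`, and testing against `q` identifies the multiple. -/
lemma leave_one_out {M : Matrix ι κ ℝ} {c : ℝ} (hc : 0 < c) (hM : MinEig M c) (z q : κ → ℝ)
    (i : κ) (hq : 1 ≤ q i) :
    |lsSol M z i| ≤ |q ⬝ᵥ z - (M *ᵥ q) ⬝ᵥ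
      ((M.submatrix id (Subtype.val : {j // j ≠ i} → κ)) *ᵥ
        lsSol (M.submatrix id (Subtype.val : {j // j ≠ i} → κ)) (fun j => z j.1))| / c := by
  set N := M.submatrix id (Subtype.val : {j // j ≠ i} → κ) with hN
  have hNm : MinEig N c := hM.submatrix _
  set a := lsSol N (fun j => z j.1) with ha
  set d := lsSol M z - extZ a with hd
  set κ' := z i - (Mᵀ *ᵥ (N *ᵥ a)) i with hκ
  have hGa : ∀ j, j ≠ i → (Mᵀ *ᵥ (N *ᵥ a)) j = z j := by
    intro j hj
    have := congrFun (normal_eq hc hNm (fun j => z j.1)) ⟨j, hj⟩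
    rw [← this]
    rfl
  have hGd : Mᵀ *ᵥ (M *ᵥ d) = Pi.single i κ' := by
    rw [hd, Matrix.mulVec_sub, Matrix.mulVec_sub, normal_eq hc hM, mulVec_extZ, ← hN]
    ext j
    by_cases hj : j = i
    · subst hj; simp [hκ]
    · rw [Pi.sub_apply, hGa j hj]; simp [hj]
  have h1 : (M *ᵥ d) ⬝ᵥ (M *ᵥ q) = κ' * q i := by
    rw [mulVec_dot_mulVec, hGd, single_dotProduct]
  have h2 : (M *ᵥ d) ⬝ᵥ (M *ᵥ q) = q ⬝ᵥ z - (M *ᵥ q) ⬝ᵥ (N *ᵥ a) := by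
    rw [hd, Matrix.mulVec_sub, sub_dotProduct, lsSol_dot hc hM, mulVec_extZ, ← hN,
      dotProduct_comm z, dotProduct_comm (N *ᵥ a)]
  have h3 : (M *ᵥ d) ⬝ᵥ (M *ᵥ d) = κ' * d i := by
    rw [mulVec_dot_mulVec, hGd, single_dotProduct]
  have hdi : d i = lsSol M z i := by
    simp [hd, extZ_not a (j := i) (by simp)]
  have h4 : c * d i ^ 2 ≤ κ' * d i := by
    rw [← h3]
    exact le_trans (mul_le_mul_of_nonneg_left (sq_le_dot_self d i) hc.le) (hM d)
  rw [← h2, h1, ← hdi, le_div_iff₀ hc, abs_mul, abs_of_nonneg (by linarith : 0 ≤ q i)]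
  have h5 : |d i| * c ≤ |κ'| := by
    by_contra hlt
    push Not at hlt
    have h6 : κ' * d i ≤ |κ'| * |d i| := by rw [← abs_mul]; exact le_abs_self _
    rw [← sq_abs (d i)] at h4
    rcases (abs_nonneg (d i)).lt_or_eq with h | h
    · nlinarith
    · rw [← h] at hlt; linarith [abs_nonneg κ']
  nlinarith [abs_nonneg κ']

end

lemma lsSol_smul {ι κ : Type*} [Fintype ι] [Fintype κ] [DecidableEq κ]
    (M : Matrix ι κ ℝ) (a : ℝ) (z : κ → ℝ) : lsSol M (a • z) = a • lsSol M z :=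
  Matrix.mulVec_smul _ _ _

/-- The columns of `X` indexed by the support. -/
def colsS {n p : ℕ} (X : Fin n → Fin p → ℝ) (S : Finset (Fin p)) :
    Matrix (Fin n) {i : Fin p // i ∈ S} ℝ := Matrix.of fun k i => X k i.1

/-- The residual of the primal-dual candidate: the least-squares residual of the noise plus the
bias `M (MᵀM)⁻¹ z` created by the penalty. -/
noncomputable def resid {ι κ : Type*} [Fintype ι] [Fintype κ] [DecidableEq κ]
    (M : Matrix ι κ ℝ) (w : ι → ℝ) (z : κ → ℝ) : ι → ℝ :=
  w - M *ᵥ (lsSol M (Mᵀ *ᵥ w) - lsSol M z)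

/-- The fitted vector `N (NᵀN)⁻¹ z`, where `N` is `M` without its column `i`. -/
noncomputable def looFit {ι κ : Type*} [Fintype ι] [Fintype κ] [DecidableEq κ]
    (i : κ) (z : κ → ℝ) (N : Matrix ι {j : κ // j ≠ i} ℝ) : ι → ℝ :=
  N *ᵥ lsSol N (fun j => z j.1)

/-- Deterministic conditions under which the primal-dual construction succeeds: a well-conditioned
design on the support, small noise fit, small leave-one-out terms, and small correlation of the
residual with the part of each inactive column that the active columns do not explain. -/
lemma propR_det {n p : ℕ} (hn : 0 < n) (X : Fin n → Fin p → ℝ) (βs : Fin p → ℝ)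
    (w : Fin n → ℝ) (lam : ℝ) (hlam : 0 < lam) (S : Finset (Fin p)) (hS : ∀ i, i ∈ S ↔ βs i ≠ 0)
    {c : ℝ} (hc : 0 < c) (hM : MinEig (colsS X S) c) (z : {i // i ∈ S} → ℝ)
    (hz : ∀ i, z i = sgn (βs i.1)) (ρ Dmax ε : ℝ) (hρ : ∀ i : {i // i ∈ S}, ρ ≤ |βs i.1|)
    (hnoise : ∀ i, |w ⬝ᵥ (colsS X S *ᵥ lsSol (colsS X S) (Pi.single i 1))| < ρ / 2)
    (q : {i // i ∈ S} → {i // i ∈ S} → ℝ) (hq : ∀ i, 1 ≤ q i i)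
    (hqz : ∀ i, |q i ⬝ᵥ z| ≤ Dmax)
    (hloo : ∀ i, |(colsS X S *ᵥ q i) ⬝ᵥ
      looFit i z ((colsS X S).submatrix id Subtype.val)| ≤ 1)
    (hbias : n * lam * ((Dmax + 1) / c) ≤ ρ / 2)
    (θ : {i // i ∉ S} → {i // i ∈ S} → ℝ) (hθ : ∀ j, |θ j ⬝ᵥ z| ≤ 1 - ε)
    (hdual : ∀ j : {i // i ∉ S}, |((fun k => X k j.1) - colsS X S *ᵥ θ j) ⬝ᵥ
      resid (colsS X S) w ((n * lam) • z)| ≤ n * lam * ε) :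
    PropR (Matrix.of X) βs w lam := by
  have hn' : (0 : ℝ) < n := by exact_mod_cast hn
  have hnl : 0 < n * lam := mul_pos hn' hlam
  set M := colsS X S with hMdef
  set d := lsSol M (Mᵀ *ᵥ w) - lsSol M ((n * lam) • z) with hd
  have hr : resid M w ((n * lam) • z) = w - M *ᵥ d := rfl
  have hr' : ∀ k, w k - ∑ j, (Matrix.of X) k j * extZ d j =
      resid M w ((n * lam) • z) k := by
    intro k
    have := congrFun (mulVec_extZ (Matrix.of X) d) k
    rw [hr, Pi.sub_apply]
    congr 1
  have hcol : ∀ i, ∑ k, (Matrix.of X) k i * (w k - ∑ j, (Matrix.of X) k j * extZ d j) =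
      (fun k => X k i) ⬝ᵥ resid M w ((n * lam) • z) := by
    intro i
    simp only [hr']
    rfl
  have hnorm : Mᵀ *ᵥ resid M w ((n * lam) • z) = (n * lam) • z := residual_normal hc hM w _
  refine propR_of_kkt hn _ βs w lam hlam.le (extZ d) ?_ ?_ ?_ ?_
  · intro i hi
    exact extZ_not d (fun h => (hS i).1 h hi)
  · intro i hi
    have hiS := (hS i).2 hi
    rw [extZ_of d hiS]
    refine lt_of_lt_of_le ?_ (hρ ⟨i, hiS⟩)
    have h1 := hnoise ⟨i, hiS⟩
    rw [← lsSol_transpose_apply M hc hM] at h1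
    have h2 : |lsSol M z ⟨i, hiS⟩| ≤ (Dmax + 1) / c := by
      refine (leave_one_out hc hM z (q ⟨i, hiS⟩) ⟨i, hiS⟩ (hq _)).trans ?_
      gcongr
      exact (abs_sub _ _).trans (add_le_add (hqz _) (hloo _))
    have h3 : d ⟨i, hiS⟩ = lsSol M (Mᵀ *ᵥ w) ⟨i, hiS⟩ - n * lam * lsSol M z ⟨i, hiS⟩ := by
      rw [hd, lsSol_smul]; rfl
    rw [h3]
    calc _ ≤ |lsSol M (Mᵀ *ᵥ w) ⟨i, hiS⟩| + |n * lam * lsSol M z ⟨i, hiS⟩| := abs_sub _ _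
      _ = |lsSol M (Mᵀ *ᵥ w) ⟨i, hiS⟩| + n * lam * |lsSol M z ⟨i, hiS⟩| := by
        rw [abs_mul, abs_of_pos hnl]
      _ < ρ / 2 + n * lam * ((Dmax + 1) / c) := by
        refine add_lt_add_of_lt_of_le h1 ?_
        gcongr
      _ ≤ ρ := by linarith
  · intro i hi
    rw [hcol]
    have := congrFun hnorm ⟨i, (hS i).2 hi⟩
    rw [Pi.smul_apply, hz, smul_eq_mul] at this
    exact this
  · intro i hi
    rw [hcol]
    have hiS : i ∉ S := fun h => (hS i).1 h hi
    have h1 : (fun k => X k i) = ((fun k => X k i) - M *ᵥ θ ⟨i, hiS⟩) + M *ᵥ θ ⟨i, hiS⟩ := by abel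
    have h2 : (M *ᵥ θ ⟨i, hiS⟩) ⬝ᵥ resid M w ((n * lam) • z) = n * lam * (θ ⟨i, hiS⟩ ⬝ᵥ z) := by
      rw [dotProduct_comm, Matrix.dotProduct_mulVec, ← Matrix.mulVec_transpose, hnorm,
        smul_dotProduct, dotProduct_comm, smul_eq_mul]
    rw [h1, add_dotProduct, h2]
    refine (abs_add_le _ _).trans ?_
    have h3 := hdual ⟨i, hiS⟩
    rw [abs_mul, abs_of_pos hnl]
    have h4 := mul_le_mul_of_nonneg_left (hθ ⟨i, hiS⟩) hnl.le
    linarith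

/-! ### A grid net for the smallest eigenvalue -/

/-- The grid point with coordinates `(g i - m) / m ∈ [-1, 1]`. -/
noncomputable def gridPt {κ : Type*} (m : ℕ) (g : κ → Fin (2 * m + 1)) : κ → ℝ :=
  fun i => ((g i : ℝ) - m) / m

lemma exists_gridPt {κ : Type*} (m : ℕ) (hm : 0 < m) (u : κ → ℝ) (hu : ∀ i, |u i| ≤ 1) :
    ∃ g : κ → Fin (2 * m + 1), ∀ i, |u i - gridPt m g i| ≤ 1 / m := by
  have hm' : (0 : ℝ) < m := by exact_mod_cast hm
  have h : ∀ i, ∃ g : Fin (2 * m + 1), |u i - ((g : ℝ) - m) / m| ≤ 1 / m := by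
    intro i
    have hi := abs_le.1 (hu i)
    have h0 : 0 ≤ (u i + 1) * m := mul_nonneg (by linarith) hm'.le
    have hfl := Nat.floor_le h0
    have hfl2 := Nat.lt_floor_add_one ((u i + 1) * m)
    refine ⟨⟨⌊(u i + 1) * m⌋₊, ?_⟩, ?_⟩
    · rw [Nat.lt_succ_iff]
      refine Nat.floor_le_of_le ?_
      push_cast
      nlinarith
    · have : u i - ((⌊(u i + 1) * m⌋₊ : ℝ) - m) / m = ((u i + 1) * m - ⌊(u i + 1) * m⌋₊) / m := by
        field_simp
        ring
      rw [this, abs_div, abs_of_pos hm', abs_of_nonneg (by linarith)]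
      gcongr
      linarith
  choose g hg using h
  exact ⟨g, hg⟩

lemma sub_dot_self_le {ι : Type*} [Fintype ι] (a b : ι → ℝ) :
    (a - b) ⬝ᵥ (a - b) ≤ 2 * (a ⬝ᵥ a) + 2 * (b ⬝ᵥ b) := by
  have := dot_self_nonneg (a + b)
  simp only [add_dotProduct, dotProduct_add, sub_dotProduct, dotProduct_sub] at this ⊢
  linarith

/-- If a matrix with columns of squared norm at most `4n` expands every point of the grid of mesh
`1/m`, and `m` is large compared with the dimension, then its Gram matrix is well conditioned. -/
lemma minEig_of_grid {n : ℕ} {κ : Type*} [Fintype κ] (M : Matrix (Fin n) κ ℝ)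
    (m : ℕ) (hm : 0 < m) {C : ℝ} (hC : 0 < C)
    (hm1 : 4 * (Fintype.card κ : ℝ) ≤ (m : ℝ) ^ 2)
    (hm2 : 256 * (Fintype.card κ : ℝ) ^ 2 ≤ C * (m : ℝ) ^ 2)
    (hcol : ∀ i, (fun k => M k i) ⬝ᵥ (fun k => M k i) ≤ 4 * n)
    (hgrid : ∀ g : κ → Fin (2 * m + 1),
      n * (C * (gridPt m g ⬝ᵥ gridPt m g)) / 4 ≤ (M *ᵥ gridPt m g) ⬝ᵥ (M *ᵥ gridPt m g)) :
    MinEig M (C / 64 * n) := by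
  have hm' : (0 : ℝ) < m := by exact_mod_cast hm
  have hn0 : (0 : ℝ) ≤ n := Nat.cast_nonneg n
  have key : ∀ u : κ → ℝ, u ⬝ᵥ u = 1 → C / 64 * n ≤ (M *ᵥ u) ⬝ᵥ (M *ᵥ u) := by
    intro u hu
    have hu1 : ∀ i, |u i| ≤ 1 := fun i => by
      have := sq_le_dot_self u i
      rw [hu] at this
      exact abs_le_one_iff_mul_self_le_one.2 (by rwa [← sq])
    obtain ⟨g, hg⟩ := exists_gridPt m hm u hu1
    set y := gridPt m g
    set d := u - y with hd
    have hdd : d ⬝ᵥ d ≤ Fintype.card κ / (m : ℝ) ^ 2 := by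
      calc d ⬝ᵥ d = ∑ i, |d i| ^ 2 := by simp [dotProduct, sq]
        _ ≤ ∑ _i : κ, (1 / (m : ℝ)) ^ 2 := by
          refine Finset.sum_le_sum fun i _ => ?_
          gcongr
          exact hg i
        _ = _ := by rw [Finset.sum_const, Finset.card_univ, nsmul_eq_mul]; ring
    have hMd : (M *ᵥ d) ⬝ᵥ (M *ᵥ d) ≤ 4 * n * Fintype.card κ * (d ⬝ᵥ d) := by
      calc (M *ᵥ d) ⬝ᵥ (M *ᵥ d) = ∑ k, (M k ⬝ᵥ d) ^ 2 := by simp [dotProduct, sq, Matrix.mulVec]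
        _ ≤ ∑ k, (M k ⬝ᵥ M k) * (d ⬝ᵥ d) := Finset.sum_le_sum fun k _ => dot_sq_le _ _
        _ = (∑ i, (fun k => M k i) ⬝ᵥ (fun k => M k i)) * (d ⬝ᵥ d) := by
          rw [← Finset.sum_mul]
          congr 1
          simp only [dotProduct]
          rw [Finset.sum_comm]
        _ ≤ (∑ _i : κ, 4 * (n : ℝ)) * (d ⬝ᵥ d) := by
          gcongr with i
          · exact dot_self_nonneg d
          · exact hcol i
        _ = _ := by rw [Finset.sum_const, Finset.card_univ, nsmul_eq_mul]; ring
    have hs : Fintype.card κ / (m : ℝ) ^ 2 ≤ 1 / 4 := by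
      rw [div_le_div_iff₀ (by positivity) (by norm_num)]
      linarith
    have hy : 1 / 4 ≤ y ⬝ᵥ y := by
      have h1 : u = y - (-d) := by rw [hd]; abel
      have h2 := sub_dot_self_le y (-d)
      rw [← h1, hu, neg_dotProduct_neg] at h2
      linarith
    have hMy : (M *ᵥ y) ⬝ᵥ (M *ᵥ y) ≤ 2 * ((M *ᵥ u) ⬝ᵥ (M *ᵥ u)) + 2 * ((M *ᵥ d) ⬝ᵥ (M *ᵥ d)) := by
      have h1 : M *ᵥ y = M *ᵥ u - M *ᵥ d := by rw [← Matrix.mulVec_sub, hd]; congr 1; abel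
      rw [h1]
      exact sub_dot_self_le _ _
    have h3 := hgrid g
    have h4 : n * (C * (1 / 4)) / 4 ≤ n * (C * (y ⬝ᵥ y)) / 4 := by gcongr
    have h5 : 4 * n * Fintype.card κ * (d ⬝ᵥ d) ≤ n * (C / 64) := by
      calc 4 * n * Fintype.card κ * (d ⬝ᵥ d)
          ≤ 4 * n * Fintype.card κ * (Fintype.card κ / (m : ℝ) ^ 2) := by gcongr
        _ = n * (4 * (Fintype.card κ : ℝ) ^ 2 / (m : ℝ) ^ 2) := by ring
        _ ≤ n * (C / 64) := by
          refine mul_le_mul_of_nonneg_left ?_ hn0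
          rw [div_le_div_iff₀ (by positivity) (by norm_num)]
          linarith
    linarith
  intro u
  rcases (dot_self_nonneg u).lt_or_eq with h | h
  · set a := Real.sqrt (u ⬝ᵥ u) with ha
    have ha0 : 0 < a := Real.sqrt_pos.2 h
    have haa : a * a = u ⬝ᵥ u := Real.mul_self_sqrt h.le
    have h1 := key (a⁻¹ • u) (by
      rw [smul_dotProduct, dotProduct_smul, smul_eq_mul, smul_eq_mul, ← haa]
      field_simp)
    rw [Matrix.mulVec_smul, smul_dotProduct, dotProduct_smul, smul_eq_mul, smul_eq_mul] at h1
    rw [← haa]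
    calc C / 64 * n * (a * a) ≤ (a⁻¹ * (a⁻¹ * ((M *ᵥ u) ⬝ᵥ (M *ᵥ u)))) * (a * a) := by gcongr
      _ = _ := by field_simp
  · rw [← h, mul_zero]
    exact dot_self_nonneg _

/-! ### Gaussian tail bounds -/

lemma integral_exp_sq_gaussianReal {v : NNReal} (hv : v ≠ 0) {b : ℝ} (hb : 0 < b) :
    ∫ x, Real.exp ((1 - b ^ 2) / (2 * v) * x ^ 2) ∂(gaussianReal 0 v) = 1 / b := by
  have hv' : (0 : ℝ) < v := by positivity
  rw [integral_gaussianReal_eq_integral_smul hv]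
  have h : ∀ x : ℝ, gaussianPDFReal 0 v x • Real.exp ((1 - b ^ 2) / (2 * v) * x ^ 2) =
      (Real.sqrt (2 * Real.pi * v))⁻¹ * Real.exp (-(b ^ 2 / (2 * v)) * x ^ 2) := by
    intro x
    rw [gaussianPDFReal, smul_eq_mul, mul_assoc, ← Real.exp_add]
    congr 2
    field_simp
    ring
  simp_rw [h]
  rw [integral_const_mul, integral_gaussian]
  have h2 : Real.pi / (b ^ 2 / (2 * v)) = (2 * Real.pi * v) / b ^ 2 := by field_simp
  rw [h2, Real.sqrt_div' _ (by positivity), Real.sqrt_sq hb.le]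
  have : 0 < Real.sqrt (2 * Real.pi * v) := Real.sqrt_pos.2 (by positivity)
  field_simp

/-- Exponential Markov inequality for a product measure and an additive functional whose
exponential has a nonzero integral (so that it is integrable). -/
lemma pi_markov {n : ℕ} (μ : Measure ℝ) [IsProbabilityMeasure μ] (f : Fin n → ℝ → ℝ)
    (c : Fin n → ℝ) (hc : ∀ k, c k ≠ 0) (hf : ∀ k, ∫ x, Real.exp (f k x) ∂μ = c k) (T : ℝ) :
    (Measure.pi (fun _ : Fin n => μ)).real {y | T ≤ ∑ k, f k (y k)} ≤
      Real.exp (-T) * ∏ k, c k := by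
  have h1 : ∫ y, Real.exp (∑ k, f k (y k)) ∂(Measure.pi (fun _ : Fin n => μ)) = ∏ k, c k := by
    simp_rw [Real.exp_sum]
    rw [integral_fintype_prod_eq_prod (f := fun k x => Real.exp (f k x))]
    simp_rw [hf]
  have hexp_int : Integrable (fun y => Real.exp (∑ k, f k (y k))) (Measure.pi (fun _ : Fin n => μ)) := by
    by_contra hni
    rw [integral_undef hni] at h1
    exact (Finset.prod_ne_zero_iff.2 fun k _ => hc k) h1.symm
  have h2 := mul_meas_ge_le_integral_of_nonneg
    (Filter.Eventually.of_forall fun y => (Real.exp_pos _).le) hexp_int (Real.exp T)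
  rw [h1] at h2
  have h3 : {y : Fin n → ℝ | Real.exp T ≤ Real.exp (∑ k, f k (y k))} =
      {y | T ≤ ∑ k, f k (y k)} := by
    ext y; simp
  rw [h3] at h2
  rw [Real.exp_neg, ← div_eq_inv_mul, le_div_iff₀ (Real.exp_pos T)]
  linarith

lemma chiSq_lower {n : ℕ} {v : NNReal} (hv : v ≠ 0) :
    (Measure.pi (fun _ : Fin n => gaussianReal 0 v)).real {y | y ⬝ᵥ y ≤ n * v / 4} ≤
      (Real.exp 1 / 3) ^ n := by
  have hv' : (0 : ℝ) < v := by positivity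
  have h := pi_markov (n := n) (gaussianReal 0 v) (fun _ x => (1 - 3 ^ 2) / (2 * v) * x ^ 2)
    (fun _ => 1 / 3) (by norm_num) (fun _ => integral_exp_sq_gaussianReal hv (by norm_num)) (-n)
  refine le_trans (measureReal_mono ?_) (h.trans_eq ?_)
  · intro y hy
    simp only [Set.mem_ofPred_eq] at hy ⊢
    rw [← Finset.mul_sum]
    have e : ∑ k, y k ^ 2 = y ⬝ᵥ y := by simp [dotProduct, sq]
    rw [e]
    calc (-n : ℝ) = (1 - 3 ^ 2) / (2 * v) * (n * v / 4) := by field_simp; ring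
      _ ≤ _ := by
        refine mul_le_mul_of_nonpos_left hy ?_
        rw [div_nonpos_iff]; right; constructor <;> [norm_num; positivity]
  · rw [Finset.prod_const, Finset.card_univ, Fintype.card_fin, neg_neg, div_pow, div_pow,
      ← Real.exp_nat_mul, mul_one, one_pow]
    ring

lemma chiSq_upper {n : ℕ} {v : NNReal} (hv : v ≠ 0) :
    (Measure.pi (fun _ : Fin n => gaussianReal 0 v)).real {y | 4 * n * v ≤ y ⬝ᵥ y} ≤
      (2 * Real.exp (-(3 / 2))) ^ n := by
  have hv' : (0 : ℝ) < v := by positivity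
  have h := pi_markov (n := n) (gaussianReal 0 v)
    (fun _ x => (1 - (1 / 2) ^ 2) / (2 * v) * x ^ 2)
    (fun _ => 1 / (1 / 2)) (by norm_num)
    (fun _ => integral_exp_sq_gaussianReal hv (by norm_num)) (n * (3 / 2))
  refine le_trans (measureReal_mono ?_) (h.trans_eq ?_)
  · intro y hy
    simp only [Set.mem_ofPred_eq] at hy ⊢
    rw [← Finset.mul_sum]
    have e : ∑ k, y k ^ 2 = y ⬝ᵥ y := by simp [dotProduct, sq]
    rw [e]
    calc (n * (3 / 2) : ℝ) = (1 - (1 / 2) ^ 2) / (2 * v) * (4 * n * v) := by field_simp; norm_num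
      _ ≤ _ := by
        refine mul_le_mul_of_nonneg_left hy ?_
        exact div_nonneg (by norm_num) (by positivity)
  · rw [Finset.prod_const, Finset.card_univ, Fintype.card_fin, mul_pow, ← Real.exp_nat_mul,
      mul_comm]
    norm_num

lemma gauss_linear_tail {n : ℕ} {v : NNReal} (h : Fin n → ℝ) {v' V T : ℝ} (hvv : v ≤ v')
    (hv' : 0 < v') (hV : 0 < V) (hT : 0 ≤ T) (hh : h ⬝ᵥ h ≤ V) :
    (Measure.pi (fun _ : Fin n => gaussianReal 0 v)).real {y | T ≤ |y ⬝ᵥ h|} ≤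
      2 * Real.exp (-(T ^ 2 / (2 * v' * V))) := by
  have one : ∀ g : Fin n → ℝ, g ⬝ᵥ g ≤ V →
      (Measure.pi (fun _ : Fin n => gaussianReal 0 v)).real {y | T ≤ y ⬝ᵥ g} ≤
      Real.exp (-(T ^ 2 / (2 * v' * V))) := by
    intro g hg
    set a := T / (v' * V) with ha
    have ha0 : 0 ≤ a := by positivity
    have h1 := pi_markov (n := n) (gaussianReal 0 v) (fun k x => a * g k * x)
      (fun k => Real.exp (v * (a * g k) ^ 2 / 2)) (fun _ => (Real.exp_pos _).ne')
      (fun k => by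
        have := mgf_gaussianReal (p := gaussianReal 0 v) (X := id) (μ := 0) (v := v)
          Measure.map_id (a * g k)
        rw [mgf] at this
        simpa using this) (a * T)
    refine le_trans (measureReal_mono ?_) (h1.trans ?_)
    · intro y hy
      simp only [Set.mem_ofPred_eq] at hy ⊢
      have e : ∑ k, a * g k * y k = a * (y ⬝ᵥ g) := by
        rw [dotProduct, Finset.mul_sum]
        exact Finset.sum_congr rfl fun k _ => by ring
      rw [e]
      gcongr
    · rw [← Real.exp_sum, ← Real.exp_add]
      gcongr
      have e : ∑ k, (v : ℝ) * (a * g k) ^ 2 / 2 = v * a ^ 2 * (g ⬝ᵥ g) / 2 := by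
        rw [dotProduct, Finset.mul_sum, Finset.sum_div]
        exact Finset.sum_congr rfl fun k _ => by ring
      rw [e]
      have h2 : v * a ^ 2 * (g ⬝ᵥ g) / 2 ≤ v' * a ^ 2 * V / 2 := by
        have := dot_self_nonneg g
        gcongr
      have h3 : -(a * T) + v' * a ^ 2 * V / 2 = -(T ^ 2 / (2 * v' * V)) := by
        rw [ha]; field_simp; ring
      linarith
  have hsub : {y : Fin n → ℝ | T ≤ |y ⬝ᵥ h|} ⊆ {y | T ≤ y ⬝ᵥ h} ∪ {y | T ≤ y ⬝ᵥ (-h)} := by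
    intro y hy
    simp only [Set.mem_ofPred_eq, Set.mem_union, dotProduct_neg] at hy ⊢
    exact le_abs.1 hy
  have h1 := one h hh
  have h2 := one (-h) (by rwa [neg_dotProduct_neg])
  have h3 := measureReal_mono (μ := Measure.pi (fun _ : Fin n => gaussianReal 0 v)) hsub
  have h4 := measureReal_union_le (μ := Measure.pi (fun _ : Fin n => gaussianReal 0 v))
    {y : Fin n → ℝ | T ≤ y ⬝ᵥ h} {y | T ≤ y ⬝ᵥ (-h)}
  linarith

/-- Tail bound for the inner product of a Gaussian vector `Y` with a random vector `h (U)` that is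
independent of it, on the event that `h (U)` is short: condition on `U` and use the tail of a
one-dimensional Gaussian. -/
lemma decoupled_tail {Ω E : Type*} {mΩ : MeasurableSpace Ω} {mE : MeasurableSpace E} (P : Measure Ω)
    [IsProbabilityMeasure P] {n : ℕ} (U : Ω → E) (Y : Ω → Fin n → ℝ) (hU : Measurable U)
    (hY : Measurable Y) {v : NNReal}
    (hlaw : P.map Y = Measure.pi (fun _ : Fin n => gaussianReal 0 v)) (hind : IndepFun U Y P)
    (h : E → Fin n → ℝ) (hh : Measurable h) {v' V T : ℝ} (hvv : v ≤ v')
    (hv' : 0 < v') (hV : 0 < V) (hT : 0 ≤ T) :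
    P.real {ω | T ≤ |Y ω ⬝ᵥ h (U ω)| ∧ h (U ω) ⬝ᵥ h (U ω) ≤ V} ≤
      2 * Real.exp (-(T ^ 2 / (2 * v' * V))) := by
  set A : Set (E × (Fin n → ℝ)) := {x | T ≤ |x.2 ⬝ᵥ h x.1| ∧ h x.1 ⬝ᵥ h x.1 ≤ V} with hA
  have hhk : ∀ k, Measurable fun x : E × (Fin n → ℝ) => h x.1 k := fun k =>
    (measurable_pi_apply k).comp (hh.comp measurable_fst)
  have hAm : MeasurableSet A := by
    have m1 : Measurable fun x : E × (Fin n → ℝ) => |x.2 ⬝ᵥ h x.1| := by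
      refine Measurable.abs ?_
      unfold dotProduct
      refine Finset.measurable_sum _ fun k _ => ?_
      exact ((measurable_pi_apply k).comp measurable_snd).mul (hhk k)
    have m2 : Measurable fun x : E × (Fin n → ℝ) => h x.1 ⬝ᵥ h x.1 := by
      unfold dotProduct
      exact Finset.measurable_sum _ fun k _ => (hhk k).mul (hhk k)
    exact (measurableSet_le measurable_const m1).inter (measurableSet_le m2 measurable_const)
  have e1 : P {ω | T ≤ |Y ω ⬝ᵥ h (U ω)| ∧ h (U ω) ⬝ᵥ h (U ω) ≤ V} =
      ((P.map U).prod (P.map Y)) A := by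
    rw [← (indepFun_iff_map_prod_eq_prod_map_map hU.aemeasurable hY.aemeasurable).1 hind,
      Measure.map_apply (hU.prodMk hY) hAm]
    rfl
  have : IsProbabilityMeasure (P.map U) := Measure.isProbabilityMeasure_map hU.aemeasurable
  have e2 : ((P.map U).prod (P.map Y)) A ≤
      ENNReal.ofReal (2 * Real.exp (-(T ^ 2 / (2 * v' * V)))) := by
    rw [hlaw, Measure.prod_apply hAm]
    calc _ ≤ ∫⁻ _u : E, ENNReal.ofReal (2 * Real.exp (-(T ^ 2 / (2 * v' * V)))) ∂(P.map U) := by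
          refine lintegral_mono fun u => ?_
          rw [← ofReal_measureReal]
          refine ENNReal.ofReal_le_ofReal ?_
          by_cases hu : h u ⬝ᵥ h u ≤ V
          · refine le_trans (measureReal_mono ?_) (gauss_linear_tail (h u) hvv hv' hV hT hu)
            intro y hy
            exact hy.1
          · have : Prod.mk u ⁻¹' A = ∅ := by
              ext y
              simp [hA, hu]
            rw [this, measureReal_empty]
            positivity
      _ = _ := by simp
  rw [measureReal_def, e1]
  exact ENNReal.toReal_le_of_le_ofReal (by positivity) e2

/-! ### Linear functionals of a Gaussian matrix with i.i.d. rows -/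

section
variable {ι : Type*} [Fintype ι]

lemma hasGaussianLaw_id_pi :
    HasGaussianLaw (fun g : ι → ℝ => g) (Measure.pi (fun _ : ι => gaussianReal 0 1)) := by
  have hind : iIndepFun (fun (i : ι) (g : ι → ℝ) => g i)
      (Measure.pi (fun _ : ι => gaussianReal 0 1)) :=
    iIndepFun_pi (X := fun _ x => x) fun _ => aemeasurable_id
  refine iIndepFun.hasGaussianLaw (fun i => ?_) hind
  refine ⟨?_⟩
  rw [(measurePreserving_eval (fun _ : ι => gaussianReal 0 1) i).map_eq]
  infer_instance

lemma integral_dot_pi (a : ι → ℝ) :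
    ∫ g, a ⬝ᵥ g ∂(Measure.pi (fun _ : ι => gaussianReal 0 1)) = 0 := by
  have hG := hasGaussianLaw_id_pi (ι := ι)
  have h1 : ∀ i : ι, ∫ g : ι → ℝ, g i ∂(Measure.pi (fun _ : ι => gaussianReal 0 1)) = 0 := by
    intro i
    rw [integral_comp_eval (μ := fun _ : ι => gaussianReal 0 1) (f := fun x => x)
      aestronglyMeasurable_id]
    exact integral_id_gaussianReal
  unfold dotProduct
  rw [integral_finsetSum _ fun i _ => ((hG.eval i).integrable).const_mul (a i)]
  simp [integral_const_mul, h1]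

lemma cov_dot_pi [DecidableEq ι] (a b : ι → ℝ) :
    cov[fun g => a ⬝ᵥ g, fun g => b ⬝ᵥ g; Measure.pi (fun _ : ι => gaussianReal 0 1)]
      = a ⬝ᵥ b := by
  have hG := hasGaussianLaw_id_pi (ι := ι)
  have hind : iIndepFun (fun (i : ι) (g : ι → ℝ) => g i)
      (Measure.pi (fun _ : ι => gaussianReal 0 1)) :=
    iIndepFun_pi (X := fun _ x => x) fun _ => aemeasurable_id
  have hm : ∀ i : ι, MemLp (fun g : ι → ℝ => g i) 2 (Measure.pi (fun _ : ι => gaussianReal 0 1)) :=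
    fun i => (hG.eval i).memLp_two
  have hc : ∀ i j : ι, cov[fun g : ι → ℝ => g i, fun g => g j;
      Measure.pi (fun _ : ι => gaussianReal 0 1)] = if i = j then 1 else 0 := by
    intro i j
    split_ifs with h
    · subst h
      rw [covariance_self (measurable_pi_apply i).aemeasurable]
      have := variance_map (μ := Measure.pi (fun _ : ι => gaussianReal 0 1)) (X := fun x : ℝ => x)
        (Y := fun g : ι → ℝ => g i) aemeasurable_id (measurable_pi_apply i).aemeasurable
      rw [(measurePreserving_eval (fun _ : ι => gaussianReal 0 1) i).map_eq] at this
      have h2 : Var[fun x => x; gaussianReal 0 1] = (1 : NNReal) := variance_fun_id_gaussianReal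
      rw [h2] at this
      simpa [Function.comp_def] using this.symm
    · exact (hind.indepFun h).covariance_eq_zero (hm i) (hm j)
  unfold dotProduct
  rw [covariance_fun_sum_fun_sum (fun i => (hm i).const_mul (a i)) (fun j => (hm j).const_mul (b j))]
  simp [covariance_const_mul_left, covariance_const_mul_right, hc, mul_comm]

lemma map_dot_pi [DecidableEq ι] (b : ι → ℝ) :
    (Measure.pi (fun _ : ι => gaussianReal 0 1)).map (fun g => b ⬝ᵥ g) =
      gaussianReal 0 (b ⬝ᵥ b).toNNReal := by
  have hG : HasGaussianLaw (fun g : ι → ℝ => b ⬝ᵥ g) (Measure.pi (fun _ : ι => gaussianReal 0 1)) := by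
    refine hasGaussianLaw_id_pi.map_fun (F := ℝ)
      (LinearMap.toContinuousLinearMap (dotProductBilin ℝ ℝ b))
  rw [hG.map_eq_gaussianReal, integral_dot_pi, ← covariance_self hG.aemeasurable, cov_dot_pi]

lemma indep_dot_pi [DecidableEq ι] {τ : Type*} [Finite τ] (a : τ → ι → ℝ) (b : ι → ℝ)
    (hab : ∀ t, a t ⬝ᵥ b = 0) :
    IndepFun (fun (g : ι → ℝ) t => a t ⬝ᵥ g) (fun g => b ⬝ᵥ g)
      (Measure.pi (fun _ : ι => gaussianReal 0 1)) := by
  have := Fintype.ofFinite τ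
  have h := HasGaussianLaw.indepFun_of_covariance_eval
    (P := Measure.pi (fun _ : ι => gaussianReal 0 1))
    (X := fun t g => a t ⬝ᵥ g) (Y := fun (_ : Unit) g => b ⬝ᵥ g)
    (hasGaussianLaw_id_pi.map_fun (F := (τ → ℝ) × (Unit → ℝ))
      (LinearMap.toContinuousLinearMap
        ((LinearMap.pi fun t => dotProductBilin ℝ ℝ (a t)).prod
          (LinearMap.pi fun _ : Unit => dotProductBilin ℝ ℝ b))))
    (fun t _ => by rw [cov_dot_pi, hab])
  exact h.comp measurable_id (measurable_pi_apply ())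

lemma dot_mulVec_mul_transpose (A : Matrix ι ι ℝ) (a b : ι → ℝ) :
    (Aᵀ *ᵥ a) ⬝ᵥ (Aᵀ *ᵥ b) = a ⬝ᵥ ((A * Aᵀ) *ᵥ b) := by
  rw [← Matrix.mulVec_mulVec, Matrix.dotProduct_mulVec a, Matrix.mulVec_transpose A a]

end

/-- Let `X` have i.i.d. centered Gaussian rows with covariance `C`. Then `X b` has i.i.d. centered
Gaussian entries of variance `bᵀCb`, and if `C b` vanishes on a set of columns, `X b` is independent
of these columns. -/
lemma gaussianRows_dot {Ω : Type*} {mΩ : MeasurableSpace Ω} {P : Measure Ω}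
    [IsProbabilityMeasure P] {n : ℕ}
    {ι : Type*} [Fintype ι] [DecidableEq ι] {X : Ω → Fin n → ι → ℝ} {C : Matrix ι ι ℝ}
    (hX : Measurable X) (hlaw : HasIIDGaussianRows P X C) {τ : Type*} [Finite τ]
    (e : τ → ι) (b : ι → ℝ) (hb : ∀ t, (C *ᵥ b) (e t) = 0) :
    P.map (fun ω k => b ⬝ᵥ X ω k) =
      Measure.pi (fun _ : Fin n => gaussianReal 0 (b ⬝ᵥ C *ᵥ b).toNNReal) ∧
    IndepFun (fun ω k t => X ω k (e t)) (fun ω k => b ⬝ᵥ X ω k) P := by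
  classical
  have := Fintype.ofFinite τ
  obtain ⟨ρ, ⟨A, hA, hρ⟩, hmap⟩ := hlaw
  set γ : Measure (ι → ℝ) := Measure.pi (fun _ : ι => gaussianReal 0 1) with hγ
  have hAm : Measurable fun g : ι → ℝ => A.mulVec g :=
    (LinearMap.continuous_of_finiteDimensional A.mulVecLin).measurable
  have hρ' : ρ = γ.map fun g => A *ᵥ g := hρ
  have hdm : ∀ a : ι → ℝ, Measurable fun x : ι → ℝ => a ⬝ᵥ x := fun a => by
    unfold dotProduct; fun_prop
  have hem : Measurable fun (x : ι → ℝ) (t : τ) => x (e t) := by fun_prop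
  have hbA : ∀ g : ι → ℝ, b ⬝ᵥ A *ᵥ g = (Aᵀ *ᵥ b) ⬝ᵥ g := fun g => by
    rw [Matrix.dotProduct_mulVec, Matrix.mulVec_transpose]
  have hρprob : IsProbabilityMeasure ρ := by
    rw [hρ']; exact Measure.isProbabilityMeasure_map hAm.aemeasurable
  -- the law of one row
  have r1 : ρ.map (fun x => b ⬝ᵥ x) = gaussianReal 0 (b ⬝ᵥ C *ᵥ b).toNNReal := by
    rw [hρ', Measure.map_map (hdm b) hAm]
    simp only [Function.comp_def, hbA]
    rw [map_dot_pi, dot_mulVec_mul_transpose, hA]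
  set μ₁ := ρ.map fun (x : ι → ℝ) (t : τ) => x (e t) with hμ₁
  have : IsProbabilityMeasure μ₁ := Measure.isProbabilityMeasure_map hem.aemeasurable
  set μ₂ := gaussianReal 0 (b ⬝ᵥ C *ᵥ b).toNNReal with hμ₂
  have r3 : ρ.map (fun x => ((fun t => x (e t)), b ⬝ᵥ x)) = μ₁.prod μ₂ := by
    have h := indep_dot_pi (fun t => A (e t)) (Aᵀ *ᵥ b) (fun t => by
      have := hb t
      rwa [← hA, ← Matrix.mulVec_mulVec] at this)
    have h' := (indepFun_iff_map_prod_eq_prod_map_map (hem.comp hAm).aemeasurable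
      (hdm (Aᵀ *ᵥ b)).aemeasurable).1 h
    have r1' : γ.map (fun g => (Aᵀ *ᵥ b) ⬝ᵥ g) = μ₂ := by
      rw [map_dot_pi, dot_mulVec_mul_transpose, hA]
    have r0 : γ.map ((fun (x : ι → ℝ) (t : τ) => x (e t)) ∘ fun g => A *ᵥ g) = μ₁ := by
      rw [hμ₁, hρ', Measure.map_map hem hAm]
    rw [← r0, ← r1', hρ', Measure.map_map (hem.prodMk (hdm b)) hAm]
    simp only [Function.comp_def, hbA] at h' ⊢
    exact h'
  -- collect the rows
  have hbX : Measurable fun (x : Fin n → ι → ℝ) k => b ⬝ᵥ x k :=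
    measurable_pi_lambda _ fun k => (hdm b).comp (measurable_pi_apply k)
  have heX : Measurable fun (x : Fin n → ι → ℝ) k (t : τ) => x k (e t) := by fun_prop
  have f1 : P.map (fun ω k => b ⬝ᵥ X ω k) = Measure.pi fun _ : Fin n => μ₂ := by
    have : (fun ω k => b ⬝ᵥ X ω k) = (fun (x : Fin n → ι → ℝ) k => b ⬝ᵥ x k) ∘ X := rfl
    rw [this, ← Measure.map_map hbX hX, hmap,
      Measure.pi_map_pi (f := fun _ x => b ⬝ᵥ x) fun _ => (hdm b).aemeasurable, r1]
  have f2 : P.map (fun ω k (t : τ) => X ω k (e t)) = Measure.pi fun _ : Fin n => μ₁ := by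
    have : (fun ω k (t : τ) => X ω k (e t)) = (fun (x : Fin n → ι → ℝ) k (t : τ) => x k (e t)) ∘ X :=
      rfl
    rw [this, ← Measure.map_map heX hX, hmap,
      Measure.pi_map_pi (f := fun _ (x : ι → ℝ) (t : τ) => x (e t)) fun _ => hem.aemeasurable]
  refine ⟨f1, ?_⟩
  refine (indepFun_iff_map_prod_eq_prod_map_map (heX.comp hX).aemeasurable
    (hbX.comp hX).aemeasurable).2 ?_
  change P.map (fun ω => ((fun k (t : τ) => X ω k (e t)), fun k => b ⬝ᵥ X ω k)) =
    (P.map fun ω k (t : τ) => X ω k (e t)).prod (P.map fun ω k => b ⬝ᵥ X ω k)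
  rw [f1, f2, ← (measurePreserving_arrowProdEquivProdArrow (τ → ℝ) ℝ (Fin n) (fun _ => μ₁)
      (fun _ => μ₂)).map_eq, ← r3,
    ← Measure.pi_map_pi (f := fun _ (x : ι → ℝ) => ((fun t : τ => x (e t)), b ⬝ᵥ x))
      fun _ => (hem.prodMk (hdm b)).aemeasurable, ← hmap, Measure.map_map, Measure.map_map]
  · rfl
  · exact (MeasurableEquiv.measurable _).comp
      (measurable_pi_lambda _ fun k => (hem.prodMk (hdm b)).comp (measurable_pi_apply k))
  · exact hX
  · exact MeasurableEquiv.measurable _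
  · exact measurable_pi_lambda _ fun k => (hem.prodMk (hdm b)).comp (measurable_pi_apply k)

lemma indepFun_regroup {Ω α β γ : Type*} {mΩ : MeasurableSpace Ω} {mα : MeasurableSpace α}
    {mβ : MeasurableSpace β} {mγ : MeasurableSpace γ} {P : Measure Ω} [IsProbabilityMeasure P]
    {U : Ω → α} {Y : Ω → β} {W : Ω → γ} (hU : Measurable U) (hY : Measurable Y) (hW : Measurable W)
    (h1 : IndepFun U Y P) (h2 : IndepFun (fun ω => (U ω, Y ω)) W P) :
    IndepFun (fun ω => (U ω, W ω)) Y P := by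
  have hUW : IndepFun U W P := h2.comp measurable_fst measurable_id
  have hYW : IndepFun (fun ω => (U ω, Y ω)) W P := h2
  have := Measure.isProbabilityMeasure_map (μ := P) hU.aemeasurable
  have := Measure.isProbabilityMeasure_map (μ := P) hY.aemeasurable
  have := Measure.isProbabilityMeasure_map (μ := P) hW.aemeasurable
  have e1 := (indepFun_iff_map_prod_eq_prod_map_map hU.aemeasurable hY.aemeasurable).1 h1
  have e2 := (indepFun_iff_map_prod_eq_prod_map_map (hU.prodMk hY).aemeasurable
    hW.aemeasurable).1 h2
  have e3 := (indepFun_iff_map_prod_eq_prod_map_map hU.aemeasurable hW.aemeasurable).1 hUW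
  rw [indepFun_iff_map_prod_eq_prod_map_map (hU.prodMk hW).aemeasurable hY.aemeasurable, e3]
  refine ((Measure.prod_eq_generateFrom (C := Set.image2 (· ×ˢ ·) {s : Set α | MeasurableSet s}
    {t : Set γ | MeasurableSet t}) (D := {t : Set β | MeasurableSet t}) generateFrom_prod
    MeasurableSpace.generateFrom_measurableSet isPiSystem_prod MeasurableSpace.isPiSystem_measurableSet
    ?_ ?_ ?_)).symm
  · exact (P.map U).toFiniteSpanningSetsIn.prod (P.map W).toFiniteSpanningSetsIn
  · exact (P.map Y).toFiniteSpanningSetsIn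
  · rintro _ ⟨s, hs, t, ht, rfl⟩ r hr
    simp only [Set.mem_ofPred_eq] at hs ht hr
    rw [Measure.map_apply ((hU.prodMk hW).prodMk hY) ((hs.prod ht).prod hr), Measure.prod_prod]
    have e4 : (fun ω => ((U ω, W ω), Y ω)) ⁻¹' ((s ×ˢ t) ×ˢ r) =
        (fun ω => ((U ω, Y ω), W ω)) ⁻¹' ((s ×ˢ r) ×ˢ t) := by
      ext ω; simp; tauto
    rw [e4, ← Measure.map_apply ((hU.prodMk hY).prodMk hW) ((hs.prod hr).prod ht), e2,
      Measure.prod_prod, e1, Measure.prod_prod]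
    ring

section
variable {α ι κ : Type*} [MeasurableSpace α] [Fintype κ]

lemma measurable_mulVec {M : α → Matrix ι κ ℝ} (hM : ∀ i j, Measurable fun a => M a i j)
    {z : α → κ → ℝ} (hz : ∀ j, Measurable fun a => z a j) (i : ι) :
    Measurable fun a => (M a *ᵥ z a) i := by
  unfold Matrix.mulVec dotProduct
  exact Finset.measurable_sum _ fun j _ => (hM i j).mul (hz j)

lemma measurable_det [DecidableEq κ] {G : α → Matrix κ κ ℝ}
    (hG : ∀ i j, Measurable fun a => G a i j) : Measurable fun a => (G a).det := by
  simp only [Matrix.det_apply, Units.smul_def, zsmul_eq_mul]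
  exact Finset.measurable_sum _ fun σ _ =>
    (Finset.measurable_prod _ fun i _ => hG _ _).const_mul _

lemma measurable_lsSol [Fintype ι] [DecidableEq κ] {M : α → Matrix ι κ ℝ}
    (hM : ∀ i j, Measurable fun a => M a i j)
    {z : α → κ → ℝ} (hz : ∀ j, Measurable fun a => z a j) (j : κ) :
    Measurable fun a => lsSol (M a) (z a) j := by
  have hG : ∀ i j, Measurable fun a => ((M a)ᵀ * M a) i j := fun i j => by
    simp only [Matrix.mul_apply, Matrix.transpose_apply]
    exact Finset.measurable_sum _ fun k _ => (hM k i).mul (hM k j)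
  refine measurable_mulVec (M := fun a => ((M a)ᵀ * M a)⁻¹) (fun i j => ?_) hz j
  simp only [Matrix.inv_def, Ring.inverse_eq_inv', Matrix.smul_apply, smul_eq_mul,
    Matrix.adjugate_apply]
  refine (measurable_det hG).inv.mul (measurable_det fun i' j' => ?_)
  by_cases h : i' = j
  · subst h
    simp
  · simpa [Matrix.updateRow_ne h] using hG i' j'

lemma measurable_resid [Fintype ι] [DecidableEq κ] {M : α → Matrix ι κ ℝ}
    (hM : ∀ i j, Measurable fun a => M a i j) {w : α → ι → ℝ}
    (hw : ∀ i, Measurable fun a => w a i) (z : κ → ℝ) :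
    Measurable fun a => resid (M a) (w a) z := by
  refine measurable_pi_lambda _ fun i => ?_
  refine (hw i).sub (measurable_mulVec (z := fun a => lsSol (M a) ((M a)ᵀ *ᵥ w a) - lsSol (M a) z)
    hM (fun j => ?_) i)
  exact (measurable_lsSol hM (fun j' => measurable_mulVec (M := fun a => (M a)ᵀ)
    (fun i j => hM j i) hw j') j).sub (measurable_lsSol (z := fun _ => z) hM (fun _ => measurable_const) j)

lemma measurable_looFit [Fintype ι] [DecidableEq κ] (i : κ) (z : κ → ℝ) {N : α → Matrix ι {j : κ // j ≠ i} ℝ}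
    (hN : ∀ i j, Measurable fun a => N a i j) :
    Measurable fun a => looFit i z (N a) := by
  refine measurable_pi_lambda _ fun k => ?_
  have h := measurable_lsSol (z := fun _ => fun j : {j : κ // j ≠ i} => z j.1) hN
    (fun _ => measurable_const)
  exact measurable_mulVec hN h k

end

/-! ### Restriction to the support -/

section
variable {p : ℕ} {Sig : Matrix (Fin p) (Fin p) ℝ} {S : Finset (Fin p)}

lemma colsS_mulVec {n : ℕ} (X : Fin n → Fin p → ℝ) (y : {i // i ∈ S} → ℝ) :
    colsS X S *ᵥ y = fun k => extZ y ⬝ᵥ X k := by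
  ext k
  rw [extZ_dot, dotProduct_comm]
  rfl

lemma sig_extZ (y : {i // i ∈ S} → ℝ) (j : Fin p) :
    (Sig *ᵥ extZ y) j = (fun i : {i // i ∈ S} => Sig j i.1) ⬝ᵥ y := dot_extZ y (Sig j)

lemma quad_extZ (y : {i // i ∈ S} → ℝ) :
    extZ y ⬝ᵥ Sig *ᵥ extZ y = y ⬝ᵥ subSS Sig S *ᵥ y := by
  rw [extZ_dot]
  congr 1
  ext i
  exact sig_extZ y i.1

lemma subSS_isUnit {C : ℝ} (hC : 0 < C)
    (heig : ∀ x : {i // i ∈ S} → ℝ, C * ∑ i, x i ^ 2 ≤ x ⬝ᵥ (subSS Sig S).mulVec x) :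
    IsUnit (subSS Sig S).det := by
  rw [isUnit_iff_ne_zero]
  intro h0
  obtain ⟨v, hv, hv0⟩ := Matrix.exists_mulVec_eq_zero_iff.mpr h0
  have h1 := heig v
  rw [hv0, dotProduct_zero] at h1
  have e : ∑ i, v i ^ 2 = v ⬝ᵥ v := by simp [dotProduct, sq]
  rw [e] at h1
  have h2 : v ⬝ᵥ v = 0 := le_antisymm (by nlinarith) (dot_self_nonneg v)
  exact hv (dotProduct_self_eq_zero.mp h2)

/-- Rows of `B Σ_SS⁻¹` solve the linear system with matrix `Σ_SS`, by symmetry. -/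
lemma subSS_solve (hsym : ∀ i j, Sig i j = Sig j i) (hdet : IsUnit (subSS Sig S).det) {τ : Type*}
    (B : Matrix τ {i // i ∈ S} ℝ) (t : τ) :
    subSS Sig S *ᵥ ((B * (subSS Sig S)⁻¹) t) = B t := by
  have h : B * (subSS Sig S)⁻¹ * subSS Sig S = B := by
    rw [Matrix.mul_assoc, Matrix.nonsing_inv_mul _ hdet, Matrix.mul_one]
  ext i
  conv_rhs => rw [← h]
  rw [Matrix.mul_apply, Matrix.mulVec, dotProduct]
  exact Finset.sum_congr rfl fun k _ => by
    rw [mul_comm, show subSS Sig S i k = subSS Sig S k i from hsym _ _]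

lemma abs_dot_le {κ : Type*} [Fintype κ] (a z : κ → ℝ) (hz : ∀ i, |z i| ≤ 1) :
    |a ⬝ᵥ z| ≤ ∑ i, |a i| := by
  refine (Finset.abs_sum_le_sum_abs _ _).trans (Finset.sum_le_sum fun i _ => ?_)
  rw [abs_mul]
  exact mul_le_of_le_one_right (abs_nonneg _) (hz i)

lemma dot_self_le_card {κ : Type*} [Fintype κ] (z : κ → ℝ) (hz : ∀ i, |z i| ≤ 1) :
    z ⬝ᵥ z ≤ Fintype.card κ := by
  calc z ⬝ᵥ z ≤ ∑ _i : κ, (1 : ℝ) := Finset.sum_le_sum fun i _ => by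
        rw [← sq, ← sq_abs]; exact pow_le_one₀ (abs_nonneg _) (hz i)
    _ = _ := by simp

end

/-! ### Probabilities of the bad events -/

section
variable {Ω : Type*} {mΩ : MeasurableSpace Ω} {P : Measure Ω} [IsProbabilityMeasure P] {n p : ℕ}
  {X : Ω → Fin n → Fin p → ℝ} {W : Ω → Fin n → ℝ} {Sig : Matrix (Fin p) (Fin p) ℝ}
  {S : Finset (Fin p)}

lemma measureReal_preimage_le_map {β : Type*} [MeasurableSpace β] {Y : Ω → β} (hY : Measurable Y)
    (s : Set β) : P.real (Y ⁻¹' s) ≤ (P.map Y).real s := by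
  have := Measure.isProbabilityMeasure_map (μ := P) hY.aemeasurable
  exact ENNReal.toReal_mono (measure_ne_top _ _) (Measure.le_map_apply hY.aemeasurable s)

lemma measurable_dotRow (hX : Measurable X) (b : Fin p → ℝ) :
    Measurable fun ω k => b ⬝ᵥ X ω k := by
  unfold dotProduct; fun_prop

lemma prob_grid (hX : Measurable X) (hlaw : HasIIDGaussianRows P X Sig) {C : ℝ} (hC : 0 < C)
    (heig : ∀ x : {i // i ∈ S} → ℝ, C * ∑ i, x i ^ 2 ≤ x ⬝ᵥ (subSS Sig S).mulVec x)
    (y : {i // i ∈ S} → ℝ) :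
    P.real {ω | (colsS (X ω) S *ᵥ y) ⬝ᵥ (colsS (X ω) S *ᵥ y) < n * (C * (y ⬝ᵥ y)) / 4} ≤
      (Real.exp 1 / 3) ^ n := by
  rcases (dot_self_nonneg y).eq_or_lt with h0 | h0
  · have : {ω | (colsS (X ω) S *ᵥ y) ⬝ᵥ (colsS (X ω) S *ᵥ y) < n * (C * (y ⬝ᵥ y)) / 4} = ∅ := by
      ext ω
      have := dot_self_nonneg (colsS (X ω) S *ᵥ y)
      simp [← h0, this]
    rw [this, measureReal_empty]
    positivity
  have hl := (gaussianRows_dot hX hlaw (τ := Empty) (fun t => t.elim) (extZ y)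
    (fun t => t.elim)).1
  have hv : C * (y ⬝ᵥ y) ≤ extZ y ⬝ᵥ Sig *ᵥ extZ y := by
    rw [quad_extZ]
    refine le_trans (le_of_eq ?_) (heig y)
    simp [dotProduct, sq]
  have hv0 : 0 < extZ y ⬝ᵥ Sig *ᵥ extZ y := (mul_pos hC h0).trans_le hv
  have h1 := chiSq_lower (n := n) (v := (extZ y ⬝ᵥ Sig *ᵥ extZ y).toNNReal)
    (by simpa using hv0)
  rw [← hl, Real.coe_toNNReal _ hv0.le] at h1
  refine le_trans (le_trans (measureReal_mono ?_)
    (measureReal_preimage_le_map (measurable_dotRow hX (extZ y)) _)) h1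
  intro ω hω
  simp only [Set.mem_ofPred_eq, Set.mem_preimage, colsS_mulVec] at hω ⊢
  refine hω.le.trans ?_
  gcongr

lemma prob_col (hX : Measurable X) (hlaw : HasIIDGaussianRows P X Sig) (hdiag : ∀ i, Sig i i = 1)
    (j : Fin p) :
    P.real {ω | 4 * (n : ℝ) < (fun k => X ω k j) ⬝ᵥ (fun k => X ω k j)} ≤
      (2 * Real.exp (-(3 / 2))) ^ n := by
  have hl := (gaussianRows_dot hX hlaw (τ := Empty) (fun t => t.elim) (Pi.single j 1)
    (fun t => t.elim)).1
  have hv : (Pi.single j 1 : Fin p → ℝ) ⬝ᵥ Sig *ᵥ Pi.single j 1 = 1 := by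
    simp [hdiag]
  rw [hv] at hl
  have h1 := chiSq_upper (n := n) (v := (1 : ℝ).toNNReal) (by simp)
  rw [← hl] at h1
  refine le_trans (le_trans (measureReal_mono ?_)
    (measureReal_preimage_le_map (measurable_dotRow hX (Pi.single j 1)) _)) h1
  intro ω hω
  simp only [Set.mem_ofPred_eq, Set.mem_preimage, single_one_dotProduct] at hω ⊢
  simpa using hω.le

lemma prob_noise_norm (hW : Measurable W) {σ2 : ℝ} (hσ2 : 0 < σ2)
    (hWlaw : P.map W = Measure.pi (fun _ : Fin n => gaussianReal 0 σ2.toNNReal)) :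
    P.real {ω | 4 * n * σ2 < W ω ⬝ᵥ W ω} ≤ (2 * Real.exp (-(3 / 2))) ^ n := by
  have h1 := chiSq_upper (n := n) (v := σ2.toNNReal) (by simpa using hσ2)
  rw [← hWlaw, Real.coe_toNNReal _ hσ2.le] at h1
  refine le_trans (le_trans (measureReal_mono ?_) (measureReal_preimage_le_map hW _)) h1
  intro ω hω
  simp only [Set.mem_ofPred_eq, Set.mem_preimage] at hω ⊢
  exact hω.le

/-- The Gram matrix of the active columns is well conditioned with high probability: a union bound
over the grid and over the columns. -/
lemma prob_minEig (hX : Measurable X) (hlaw : HasIIDGaussianRows P X Sig)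
    (hdiag : ∀ i, Sig i i = 1) {C : ℝ} (hC : 0 < C)
    (heig : ∀ x : {i // i ∈ S} → ℝ, C * ∑ i, x i ^ 2 ≤ x ⬝ᵥ (subSS Sig S).mulVec x)
    (m : ℕ) (hm : 0 < m) (hm1 : 4 * (S.card : ℝ) ≤ (m : ℝ) ^ 2)
    (hm2 : 256 * (S.card : ℝ) ^ 2 ≤ C * (m : ℝ) ^ 2) :
    P.real {ω | ¬ MinEig (colsS (X ω) S) (C / 64 * n)} ≤
      (2 * m + 1) ^ S.card * (Real.exp 1 / 3) ^ n + S.card * (2 * Real.exp (-(3 / 2))) ^ n := by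
  have hsub : {ω | ¬ MinEig (colsS (X ω) S) (C / 64 * n)} ⊆
      (⋃ g : {i // i ∈ S} → Fin (2 * m + 1),
        {ω | (colsS (X ω) S *ᵥ gridPt m g) ⬝ᵥ (colsS (X ω) S *ᵥ gridPt m g) <
          n * (C * (gridPt m g ⬝ᵥ gridPt m g)) / 4}) ∪
      ⋃ i : {i // i ∈ S}, {ω | 4 * (n : ℝ) < (fun k => X ω k i.1) ⬝ᵥ (fun k => X ω k i.1)} := by
    intro ω hω
    by_contra hcon
    simp only [Set.mem_union, Set.mem_iUnion, Set.mem_ofPred_eq, not_or, not_exists, not_lt] at hcon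
    exact hω (minEig_of_grid (colsS (X ω) S) m hm hC (by simpa using hm1) (by simpa using hm2)
      hcon.2 hcon.1)
  refine (measureReal_mono hsub).trans ((measureReal_union_le _ _).trans (add_le_add ?_ ?_))
  · refine (measureReal_iUnion_fintype_le _).trans ?_
    refine (Finset.sum_le_sum fun g _ => prob_grid hX hlaw hC heig (gridPt m g)).trans_eq ?_
    simp
  · refine (measureReal_iUnion_fintype_le _).trans ?_
    refine (Finset.sum_le_sum fun i _ => prob_col hX hlaw hdiag i.1).trans_eq ?_
    simp

end

section
variable {Ω : Type*} {mΩ : MeasurableSpace Ω} {P : Measure Ω} [IsProbabilityMeasure P] {n p : ℕ}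
  {X : Ω → Fin n → Fin p → ℝ} {W : Ω → Fin n → ℝ} {Sig : Matrix (Fin p) (Fin p) ℝ}
  {S : Finset (Fin p)}

/-- The contribution of the noise to an active coordinate: the noise is independent of the design,
and the coefficient vector has squared norm at most `1 / c`. -/
lemma prob_noise (hX : Measurable X) (hW : Measurable W) {σ2 : ℝ} (hσ2 : 0 < σ2)
    (hWlaw : P.map W = Measure.pi (fun _ : Fin n => gaussianReal 0 σ2.toNNReal))
    (hind : IndepFun X W P) {c : ℝ} (hc : 0 < c) {T : ℝ} (hT : 0 ≤ T) (i : {i // i ∈ S}) :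
    P.real {ω | MinEig (colsS (X ω) S) c ∧
      T ≤ |W ω ⬝ᵥ (colsS (X ω) S *ᵥ lsSol (colsS (X ω) S) (Pi.single i 1))|} ≤
      2 * Real.exp (-(T ^ 2 / (2 * σ2 * (1 / c)))) := by
  have hM : ∀ k (j : {i // i ∈ S}), Measurable fun x : Fin n → Fin p → ℝ => colsS x S k j := by
    intro k j
    simp only [colsS, Matrix.of_apply]
    fun_prop
  have hh : Measurable fun x : Fin n → Fin p → ℝ =>
      colsS x S *ᵥ lsSol (colsS x S) (Pi.single i 1) :=
    measurable_pi_lambda _ fun k => measurable_mulVec hM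
      (measurable_lsSol (z := fun _ => Pi.single i 1) hM fun _ => measurable_const) k
  refine le_trans (measureReal_mono ?_) (decoupled_tail P X W hX hW hWlaw hind _ hh
    (v' := σ2) (V := 1 / c) (T := T) (by simp [hσ2.le]) hσ2 (by positivity) hT)
  rintro ω ⟨h1, h2⟩
  refine ⟨h2, (lsSol_energy hc h1 _).trans_eq ?_⟩
  rw [single_one_dotProduct, Pi.single_eq_same]

/-- The leave-one-out term of an active coordinate: `M q` with `Σ_SS q = e_i` is independent of the
columns other than `i`. -/
lemma prob_loo (hX : Measurable X) (hlaw : HasIIDGaussianRows P X Sig)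
    (q : {i // i ∈ S} → ℝ) (i : {i // i ∈ S}) (hq : subSS Sig S *ᵥ q = Pi.single i 1) {D : ℝ}
    (hD : 0 < D) (hqi : q i ≤ D) (z : {i // i ∈ S} → ℝ) (hz : ∀ i, |z i| ≤ 1) {c : ℝ}
    (hc : 0 < c) :
    P.real {ω | MinEig (colsS (X ω) S) c ∧ 1 ≤ |(colsS (X ω) S *ᵥ q) ⬝ᵥ
      looFit i z ((colsS (X ω) S).submatrix id Subtype.val)|} ≤
      2 * Real.exp (-(1 ^ 2 / (2 * D * (S.card / c)))) := by
  have hcard : 0 < S.card := Finset.card_pos.2 ⟨i.1, i.2⟩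
  obtain ⟨hl, hind⟩ := gaussianRows_dot hX hlaw (τ := {j : {i // i ∈ S} // j ≠ i})
    (fun t => t.1.1) (extZ q) (fun t => by
      have h : (Sig *ᵥ extZ q) t.1.1 = (subSS Sig S *ᵥ q) t.1 := sig_extZ q t.1.1
      rw [h, hq, Pi.single_eq_of_ne t.2])
  have hv : extZ q ⬝ᵥ Sig *ᵥ extZ q = q i := by rw [quad_extZ, hq, dotProduct_single_one]
  have hU : Measurable fun ω k (t : {j : {i // i ∈ S} // j ≠ i}) => X ω k t.1.1 := by fun_prop
  have hh : Measurable fun N : Fin n → {j : {i // i ∈ S} // j ≠ i} → ℝ =>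
      looFit i z (Matrix.of N) :=
    measurable_looFit i z fun k j => by simp only [Matrix.of_apply]; fun_prop
  refine le_trans (measureReal_mono ?_) (decoupled_tail P _ _ hU (measurable_dotRow hX (extZ q)) hl
    hind _ hh (v' := D) (V := S.card / c) (T := 1) ?_ hD (by positivity) zero_le_one)
  · rintro ω ⟨h1, h2⟩
    rw [colsS_mulVec] at h2
    refine ⟨h2, (lsSol_energy hc (h1.submatrix fun j => j ≠ i) _).trans ?_⟩
    gcongr
    refine (dot_self_le_card _ fun j => hz _).trans ?_
    exact_mod_cast (Fintype.card_subtype_le _).trans_eq (by simp)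
  · rw [hv, Real.coe_toNNReal']
    exact max_le hqi hD.le

/-- Dual feasibility of an inactive coordinate: the part of column `j` not explained by the active
columns is independent of the residual. -/
lemma prob_dual (hX : Measurable X) (hlaw : HasIIDGaussianRows P X Sig) (hW : Measurable W)
    (hind : IndepFun X W P) (hsym : ∀ i j, Sig i j = Sig j i) (hdiag : ∀ i, Sig i i = 1)
    (hpsd : ∀ x : {i // i ∈ S} → ℝ, 0 ≤ x ⬝ᵥ (subSS Sig S).mulVec x)
    (j : {i // i ∉ S}) (θ : {i // i ∈ S} → ℝ) (hθ : subSS Sig S *ᵥ θ = subScS Sig S j)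
    (z : {i // i ∈ S} → ℝ) (hz : ∀ i, |z i| ≤ 1) {c B a T : ℝ} (hc : 0 < c) (hB : 0 < B)
    (hT : 0 ≤ T) :
    P.real {ω | MinEig (colsS (X ω) S) c ∧ W ω ⬝ᵥ W ω ≤ B ∧
      T ≤ |((fun k => X ω k j.1) - colsS (X ω) S *ᵥ θ) ⬝ᵥ resid (colsS (X ω) S) (W ω) (a • z)|} ≤
      2 * Real.exp (-(T ^ 2 / (2 * 1 * (B + a ^ 2 * S.card / c)))) := by
  set b : Fin p → ℝ := Pi.single j.1 1 - extZ θ with hb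
  have hbX : ∀ ω, (fun k => b ⬝ᵥ X ω k) = (fun k => X ω k j.1) - colsS (X ω) S *ᵥ θ := by
    intro ω
    ext k
    rw [colsS_mulVec, hb, sub_dotProduct, single_one_dotProduct]
    rfl
  have hSb : ∀ i, (Sig *ᵥ b) i = Sig i j.1 - (Sig *ᵥ extZ θ) i := by
    intro i
    rw [hb, Matrix.mulVec_sub, Pi.sub_apply, Matrix.mulVec_single_one]
    rfl
  have hS0 : ∀ t : {i // i ∈ S}, (Sig *ᵥ b) t.1 = 0 := by
    intro t
    have h : (Sig *ᵥ extZ θ) t.1 = (subSS Sig S *ᵥ θ) t := sig_extZ θ t.1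
    rw [hSb, h, hθ, hsym]
    exact sub_self _
  obtain ⟨hl, hindU⟩ := gaussianRows_dot hX hlaw (τ := {i // i ∈ S}) (fun t => t.1) b hS0
  have hv : b ⬝ᵥ Sig *ᵥ b ≤ 1 := by
    have e1 : b ⬝ᵥ Sig *ᵥ b = (Sig *ᵥ b) j.1 - θ ⬝ᵥ fun t : {i // i ∈ S} => (Sig *ᵥ b) t.1 := by
      rw [hb, sub_dotProduct, single_one_dotProduct, extZ_dot]
    have e2 : (Sig *ᵥ extZ θ) j.1 = θ ⬝ᵥ (subSS Sig S *ᵥ θ) := by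
      rw [hθ, sig_extZ, dotProduct_comm]
      rfl
    have e3 : (fun t : {i // i ∈ S} => (Sig *ᵥ b) t.1) = 0 := funext hS0
    rw [e1, e3, dotProduct_zero, hSb, hdiag, e2]
    linarith [hpsd θ]
  have hU : Measurable fun ω k (t : {i // i ∈ S}) => X ω k t.1 := by fun_prop
  have hY : Measurable fun ω k => b ⬝ᵥ X ω k := measurable_dotRow hX b
  have hXW : IndepFun (fun ω => ((fun k (t : {i // i ∈ S}) => X ω k t.1), fun k => b ⬝ᵥ X ω k))
      W P := by
    refine hind.comp (φ := fun x : Fin n → Fin p → ℝ =>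
      ((fun k (t : {i // i ∈ S}) => x k t.1), fun k => b ⬝ᵥ x k)) (ψ := id) ?_ measurable_id
    unfold dotProduct; fun_prop
  have hind3 := indepFun_regroup hU hY hW hindU hXW
  have hh : Measurable fun u : (Fin n → {i // i ∈ S} → ℝ) × (Fin n → ℝ) =>
      resid (Matrix.of u.1) u.2 (a • z) :=
    measurable_resid (fun k t => by simp only [Matrix.of_apply]; fun_prop)
      (fun k => by fun_prop) _
  have hV : 0 < B + a ^ 2 * S.card / c := by positivity
  refine le_trans (measureReal_mono ?_) (decoupled_tail P _ _ (hU.prodMk hW) hY hl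
    hind3 _ hh (v' := 1) (V := B + a ^ 2 * S.card / c) (T := T) ?_ one_pos hV hT)
  · rintro ω ⟨h1, h2, h3⟩
    rw [← hbX ω] at h3
    refine ⟨h3, (residual_energy hc h1 _ _).trans ?_⟩
    refine add_le_add h2 ?_
    gcongr
    rw [smul_dotProduct, dotProduct_smul, smul_eq_mul, smul_eq_mul, ← mul_assoc, ← sq]
    gcongr
    exact (dot_self_le_card z hz).trans_eq (by simp)
  · rw [Real.coe_toNNReal']
    exact max_le hv zero_le_one

end

/-- Finite-sample bound on the probability that the Lasso misses the sign pattern. Here `m` is the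
resolution of the grid used for the conditioning of the active columns. -/
lemma prob_failure {Ω : Type*} {mΩ : MeasurableSpace Ω} {P : Measure Ω} [IsProbabilityMeasure P]
    {n p : ℕ} {X : Ω → Fin n → Fin p → ℝ} {W : Ω → Fin n → ℝ} {Sig : Matrix (Fin p) (Fin p) ℝ}
    {S : Finset (Fin p)} (hn : 0 < n)
    (hX : Measurable X) (hlaw : HasIIDGaussianRows P X Sig) (hW : Measurable W)
    {σ2 : ℝ} (hσ2 : 0 < σ2)
    (hWlaw : P.map W = Measure.pi (fun _ : Fin n => gaussianReal 0 σ2.toNNReal))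
    (hind : IndepFun X W P) (hsym : ∀ i j, Sig i j = Sig j i) (hdiag : ∀ i, Sig i i = 1)
    {C D ε : ℝ} (hC : 0 < C) (hε : 0 < ε)
    (heig : ∀ x : {i // i ∈ S} → ℝ, C * ∑ i, x i ^ 2 ≤ x ⬝ᵥ (subSS Sig S).mulVec x)
    (hD : ∀ i : {i // i ∈ S}, ∑ j, |(subSS Sig S)⁻¹ i j| ≤ D)
    (hinc : ∀ j : {i // i ∉ S}, ∑ i, |(subScS Sig S * (subSS Sig S)⁻¹) j i| ≤ 1 - ε)
    (βs : Fin p → ℝ) (hS : ∀ i, i ∈ S ↔ βs i ≠ 0) {lam ρ : ℝ} (hlam : 0 < lam) (hρ0 : 0 ≤ ρ)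
    (hρ : ∀ i : {i // i ∈ S}, ρ ≤ |βs i.1|)
    (m : ℕ) (hm : 0 < m) (hm1 : 4 * (S.card : ℝ) ≤ (m : ℝ) ^ 2)
    (hm2 : 256 * (S.card : ℝ) ^ 2 ≤ C * (m : ℝ) ^ 2)
    (hbias : n * lam * ((D + 1) / (C / 64 * n)) ≤ ρ / 2) :
    P.real {ω | ¬ PropR (Matrix.of (X ω)) βs (W ω) lam} ≤
      (2 * m + 1) ^ S.card * (Real.exp 1 / 3) ^ n + S.card * (2 * Real.exp (-(3 / 2))) ^ n
      + (2 * Real.exp (-(3 / 2))) ^ n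
      + S.card * (2 * Real.exp (-((ρ / 2) ^ 2 / (2 * σ2 * (1 / (C / 64 * n))))))
      + S.card * (2 * Real.exp (-(1 ^ 2 / (2 * D * (S.card / (C / 64 * n))))))
      + (p - S.card) * (2 * Real.exp (-((n * lam * ε) ^ 2 /
          (2 * 1 * (4 * n * σ2 + (n * lam) ^ 2 * S.card / (C / 64 * n)))))) := by
  have hn' : (0 : ℝ) < n := by exact_mod_cast hn
  set c := C / 64 * n with hc_def
  have hc : 0 < c := by positivity
  have hdet := subSS_isUnit hC heig
  set z : {i // i ∈ S} → ℝ := fun i => sgn (βs i.1) with hz_def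
  have hz : ∀ i, |z i| ≤ 1 := fun i => abs_sgn_le _
  set q : {i // i ∈ S} → {i // i ∈ S} → ℝ := fun i => (subSS Sig S)⁻¹ i with hq_def
  set θ : {i // i ∉ S} → {i // i ∈ S} → ℝ := fun j => (subScS Sig S * (subSS Sig S)⁻¹) j with hθ_def
  have hqs : ∀ i, subSS Sig S *ᵥ q i = Pi.single i 1 := by
    intro i
    have := subSS_solve hsym hdet (1 : Matrix {i // i ∈ S} {i // i ∈ S} ℝ) i
    rw [Matrix.one_mul] at this
    rw [hq_def, this]
    ext t
    rw [Matrix.one_apply, Pi.single_apply]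
    simp [eq_comm]
  have hpsd : ∀ x : {i // i ∈ S} → ℝ, 0 ≤ x ⬝ᵥ (subSS Sig S).mulVec x := fun x =>
    (mul_nonneg hC.le (Finset.sum_nonneg fun i _ => sq_nonneg _)).trans (heig x)
  have hq1 : ∀ i, 1 ≤ q i i := by
    intro i
    -- positivity of the quadratic form of `Σ_SS` at `q - e_i`
    have h := hpsd (q i - Pi.single i 1)
    have hdi : (subSS Sig S *ᵥ Pi.single i 1) i = 1 := by
      rw [Matrix.mulVec_single_one]; exact hdiag i.1
    have h3 : q i ⬝ᵥ subSS Sig S *ᵥ Pi.single i 1 = 1 := by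
      rw [Matrix.mulVec_single_one]
      have h4 := congrFun (hqs i) i
      rw [Pi.single_eq_same] at h4
      rw [← h4, dotProduct_comm]
      exact Finset.sum_congr rfl fun k _ =>
        congrArg (fun t => t * q i k) (hsym k.1 i.1)
    rw [Matrix.mulVec_sub, hqs, sub_dotProduct, dotProduct_sub, dotProduct_sub,
      dotProduct_single_one, h3, single_one_dotProduct, single_one_dotProduct, hdi,
      Pi.single_eq_same] at h
    linarith
  have hqD : ∀ i, q i i ≤ D := fun i =>
    (le_abs_self _).trans ((Finset.single_le_sum (f := fun j => |(subSS Sig S)⁻¹ i j|)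
      (fun _ _ => abs_nonneg _) (Finset.mem_univ i)).trans (hD i))
  set B1 := {ω | ¬ MinEig (colsS (X ω) S) c} with hB1
  set B2 := {ω | 4 * n * σ2 < W ω ⬝ᵥ W ω} with hB2
  set B3 := ⋃ i : {i // i ∈ S}, {ω | MinEig (colsS (X ω) S) c ∧
      ρ / 2 ≤ |W ω ⬝ᵥ (colsS (X ω) S *ᵥ lsSol (colsS (X ω) S) (Pi.single i 1))|} with hB3
  set B4 := ⋃ i : {i // i ∈ S}, {ω | MinEig (colsS (X ω) S) c ∧ 1 ≤ |(colsS (X ω) S *ᵥ q i) ⬝ᵥ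
      looFit i z ((colsS (X ω) S).submatrix id Subtype.val)|} with hB4
  set B5 := ⋃ j : {i // i ∉ S}, {ω | MinEig (colsS (X ω) S) c ∧ W ω ⬝ᵥ W ω ≤ 4 * n * σ2 ∧
      n * lam * ε ≤ |((fun k => X ω k j.1) - colsS (X ω) S *ᵥ θ j) ⬝ᵥ
        resid (colsS (X ω) S) (W ω) ((n * lam) • z)|} with hB5
  have hsub : {ω | ¬ PropR (Matrix.of (X ω)) βs (W ω) lam} ⊆ B1 ∪ B2 ∪ B3 ∪ B4 ∪ B5 := by
    intro ω hω
    by_contra hcon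
    simp only [hB1, hB2, hB3, hB4, hB5, Set.mem_union, Set.mem_iUnion, Set.mem_ofPred_eq, not_or,
      not_exists, not_and, not_lt, not_le, not_not] at hcon
    obtain ⟨⟨⟨⟨h1, h2⟩, h3⟩, h4⟩, h5⟩ := hcon
    exact hω (propR_det hn (X ω) βs (W ω) lam hlam S hS hc h1 z (fun _ => rfl) ρ D ε hρ
      (fun i => h3 i h1) q hq1 (fun i => (abs_dot_le _ _ hz).trans (hD i))
      (fun i => (h4 i h1).le) hbias θ (fun j => (abs_dot_le _ _ hz).trans (hinc j))
      (fun j => (h5 j h1 h2).le))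
  have b1 : P.real B1 ≤ _ := prob_minEig hX hlaw hdiag hC heig m hm hm1 hm2
  have b2 : P.real B2 ≤ _ := prob_noise_norm hW hσ2 hWlaw
  have b3 : P.real B3 ≤ S.card * (2 * Real.exp (-((ρ / 2) ^ 2 / (2 * σ2 * (1 / c))))) := by
    refine (measureReal_iUnion_fintype_le _).trans ?_
    refine (Finset.sum_le_sum fun i _ => prob_noise hX hW hσ2 hWlaw hind hc
      (by positivity) i).trans_eq ?_
    simp
  have b4 : P.real B4 ≤ S.card * (2 * Real.exp (-(1 ^ 2 / (2 * D * (S.card / c))))) := by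
    refine (measureReal_iUnion_fintype_le _).trans ?_
    refine (Finset.sum_le_sum fun i _ => prob_loo hX hlaw (q i) i (hqs i)
      (one_pos.trans_le ((hq1 i).trans (hqD i))) (hqD i) z hz hc).trans_eq ?_
    simp
  have b5 : P.real B5 ≤ (p - S.card) * (2 * Real.exp (-((n * lam * ε) ^ 2 /
      (2 * 1 * (4 * n * σ2 + (n * lam) ^ 2 * S.card / c))))) := by
    refine (measureReal_iUnion_fintype_le _).trans ?_
    refine (Finset.sum_le_sum fun j _ => prob_dual hX hlaw hW hind hsym hdiag hpsd j (θ j)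
      (subSS_solve hsym hdet _ j) z hz hc (by positivity) (by positivity)).trans_eq ?_
    have hcard : ((Fintype.card {i // i ∉ S} : ℕ) : ℝ) = p - S.card := by
      rw [Fintype.card_subtype_compl, Fintype.card_coe, Fintype.card_fin, Nat.cast_sub]
      simpa using Finset.card_le_univ S
    rw [Finset.sum_const, Finset.card_univ, nsmul_eq_mul, hcard]
  have u1 := measureReal_union_le (μ := P) (B1 ∪ B2 ∪ B3 ∪ B4) B5
  have u2 := measureReal_union_le (μ := P) (B1 ∪ B2 ∪ B3) B4
  have u3 := measureReal_union_le (μ := P) (B1 ∪ B2) B3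
  have u4 := measureReal_union_le (μ := P) B1 B2
  have u5 := measureReal_mono (μ := P) hsub
  linarith

/-! ### Asymptotics -/

/-- A union bound over `N` events of probability `2 exp (-E)` vanishes once `E ≥ 2 log N`. -/
lemma tendsto_union_exp {N E : ℕ → ℝ} (hN : Tendsto N atTop atTop)
    (h : ∀ᶠ n in atTop, 2 * Real.log (N n) ≤ E n) :
    Tendsto (fun n => N n * (2 * Real.exp (-E n))) atTop (nhds 0) := by
  have h0 : Tendsto (fun n => 2 * (N n)⁻¹) atTop (nhds 0) := by
    simpa using hN.inv_tendsto_atTop.const_mul 2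
  refine squeeze_zero' ?_ ?_ h0
  · filter_upwards [hN.eventually_ge_atTop 0] with n hn
    positivity
  · filter_upwards [h, hN.eventually_gt_atTop 0] with n hn hpos
    have h1 : Real.exp (-E n) ≤ (N n)⁻¹ * (N n)⁻¹ := by
      rw [← Real.exp_log (inv_pos.2 hpos), ← Real.exp_add, Real.log_inv]
      exact Real.exp_le_exp.2 (by linarith)
    calc N n * (2 * Real.exp (-E n)) ≤ N n * (2 * ((N n)⁻¹ * (N n)⁻¹)) := by gcongr
      _ = 2 * (N n)⁻¹ := by field_simp

lemma tendsto_rpow_mul_log {c : ℝ} (hc : c < 1) (A : ℝ) :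
    Tendsto (fun n : ℕ => (n : ℝ) ^ c * (A + Real.log n) / n) atTop (nhds 0) := by
  have h1 : Tendsto (fun x : ℝ => x ^ (-(1 - c))) atTop (nhds 0) :=
    tendsto_rpow_neg_atTop (by linarith)
  have h2 : Tendsto (fun x : ℝ => Real.log x / x ^ (1 - c)) atTop (nhds 0) :=
    (isLittleO_log_rpow_atTop (by linarith)).tendsto_div_nhds_zero
  have h3 := ((h1.const_mul A).add h2).comp tendsto_natCast_atTop_atTop
  rw [mul_zero, zero_add] at h3
  refine h3.congr' ?_
  filter_upwards [eventually_gt_atTop 0] with n hn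
  have hn' : (0 : ℝ) < n := by exact_mod_cast hn
  have h4 : (n : ℝ) ^ (1 - c) = n / (n : ℝ) ^ c := by
    rw [Real.rpow_sub hn', Real.rpow_one]
  have h5 : (0 : ℝ) < (n : ℝ) ^ c := Real.rpow_pos_of_pos hn' _
  simp only [Function.comp, Real.rpow_neg hn'.le, h4]
  field_simp

section scaling

variable {p s : ℕ → ℕ} {c1 c2 K : ℝ}

/-- Polynomial sparsity makes `s log s`, up to constants in the logarithm, negligible against
`n`. -/
lemma tendsto_s_log (hK : 0 < K) (hc : c1 < 1)
    (hscale_s : ∀ n : ℕ, (s n : ℝ) ≤ K * (n : ℝ) ^ c1) {B : ℝ} (hB : 0 ≤ B) :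
    Tendsto (fun n : ℕ => s n * Real.log (B * s n + 1) / n) atTop (nhds 0) := by
  have h := (tendsto_rpow_mul_log hc (Real.log (B * K + 1))).const_mul K
  rw [mul_zero] at h
  refine squeeze_zero' (Eventually.of_forall fun n => ?_) ?_ h
  · have : 0 ≤ Real.log (B * s n + 1) := Real.log_nonneg (le_add_of_nonneg_left (by positivity))
    positivity
  · filter_upwards [eventually_gt_atTop 0] with n hn
    have hn' : (1 : ℝ) ≤ n := by exact_mod_cast hn
    have h1 : (n : ℝ) ^ c1 ≤ n := by
      simpa using Real.rpow_le_rpow_of_exponent_le hn' hc.le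
    have h2 : Real.log (B * s n + 1) ≤ Real.log (B * K + 1) + Real.log n := by
      rw [← Real.log_mul (by positivity) (by positivity)]
      refine Real.log_le_log (by positivity) ?_
      have : (s n : ℝ) ≤ K * n := (hscale_s n).trans (by gcongr)
      nlinarith [mul_le_mul_of_nonneg_left this hB]
    have h3 : 0 ≤ Real.log (B * s n + 1) := Real.log_nonneg (le_add_of_nonneg_left (by positivity))
    calc s n * Real.log (B * s n + 1) / n
        ≤ (K * (n : ℝ) ^ c1) * (Real.log (B * K + 1) + Real.log n) / n := by
          gcongr
          exact hscale_s n
      _ = _ := by ring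

lemma tendsto_s_log_p (hK : 0 < K) (hc2 : 0 < c2) (hc12 : c1 + c2 < 1)
    (hps : Tendsto (fun n => (p n : ℝ) - s n) atTop atTop)
    (hscale_s : ∀ n : ℕ, (s n : ℝ) ≤ K * (n : ℝ) ^ c1)
    (hscale_p : ∀ n : ℕ, (p n : ℝ) ≤ K * Real.exp ((n : ℝ) ^ c2)) :
    Tendsto (fun n : ℕ => s n * Real.log ((p n : ℝ) - s n) / n) atTop (nhds 0) := by
  have g1 : Tendsto (fun n : ℕ => (n : ℝ) ^ (-(1 - c1))) atTop (nhds 0) :=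
    (tendsto_rpow_neg_atTop (by linarith)).comp tendsto_natCast_atTop_atTop
  have g2 : Tendsto (fun n : ℕ => (n : ℝ) ^ (-(1 - (c1 + c2)))) atTop (nhds 0) :=
    (tendsto_rpow_neg_atTop (by linarith)).comp tendsto_natCast_atTop_atTop
  have h := ((g1.const_mul (Real.log K)).add g2).const_mul K
  simp only [mul_zero, add_zero] at h
  refine squeeze_zero' ?_ ?_ h
  · filter_upwards [hps.eventually_ge_atTop 1] with n hn
    have := Real.log_nonneg hn
    positivity
  · filter_upwards [hps.eventually_ge_atTop 1, eventually_gt_atTop 0] with n hn hn0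
    have hn' : (0 : ℝ) < n := by exact_mod_cast hn0
    have h0 := Real.log_nonneg hn
    have h1 : Real.log ((p n : ℝ) - s n) ≤ Real.log K + (n : ℝ) ^ c2 := by
      rw [← Real.log_exp ((n : ℝ) ^ c2), ← Real.log_mul hK.ne' (Real.exp_pos _).ne']
      refine Real.log_le_log (by linarith) ?_
      have : (0 : ℝ) ≤ s n := by positivity
      linarith [hscale_p n]
    calc s n * Real.log ((p n : ℝ) - s n) / n
        ≤ (K * (n : ℝ) ^ c1) * (Real.log K + (n : ℝ) ^ c2) / n := by
          gcongr
          exact hscale_s n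
      _ = _ := by
          rw [show -(1 - c1) = c1 - 1 by ring, show -(1 - (c1 + c2)) = c1 + c2 - 1 by ring,
            Real.rpow_sub hn', Real.rpow_sub hn', Real.rpow_add hn', Real.rpow_one]
          field_simp

/-- The covering number of the active directions is subexponential in `n`. -/
lemma tendsto_grid (hK : 0 < K) (hc : c1 < 1)
    (hscale_s : ∀ n : ℕ, (s n : ℝ) ≤ K * (n : ℝ) ^ c1) {L : ℝ} (hL : 0 ≤ L) {a : ℝ} (ha : 0 < a)
    (ha1 : a < 1) :
    Tendsto (fun n : ℕ => (2 * (L * s n) + 1) ^ s n * a ^ n) atTop (nhds 0) := by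
  have hl : Real.log a < 0 := Real.log_neg ha ha1
  have h1 := tendsto_s_log hK hc hscale_s (B := 2 * L) (by positivity)
  have hb : Tendsto (fun n : ℕ => Real.exp (Real.log a / 2) ^ n) atTop (nhds 0) :=
    tendsto_pow_atTop_nhds_zero_of_lt_one (Real.exp_pos _).le
      (by rw [Real.exp_lt_one_iff]; linarith)
  refine squeeze_zero' (Eventually.of_forall fun n => by positivity) ?_ hb
  filter_upwards [h1.eventually_le_const (show (0 : ℝ) < -(Real.log a / 2) by linarith),
    eventually_gt_atTop 0] with n hn hn0
  have hn' : (0 : ℝ) < n := by exact_mod_cast hn0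
  rw [div_le_iff₀ hn'] at hn
  have e1 : (2 * (L * s n) + 1) ^ s n = Real.exp (s n * Real.log (2 * L * s n + 1)) := by
    rw [Real.exp_nat_mul, Real.exp_log (by positivity), mul_assoc]
  have e2 : a ^ n = Real.exp (n * Real.log a) := by rw [Real.exp_nat_mul, Real.exp_log ha]
  rw [e1, e2, ← Real.exp_add, ← Real.exp_nat_mul]
  exact Real.exp_le_exp.2 (by nlinarith)

lemma tendsto_s_mul_pow (hK : 0 < K) (hc : c1 < 1)
    (hscale_s : ∀ n : ℕ, (s n : ℝ) ≤ K * (n : ℝ) ^ c1) {a : ℝ} (ha : 0 ≤ a) (ha1 : a < 1) :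
    Tendsto (fun n : ℕ => s n * a ^ n) atTop (nhds 0) := by
  have h := (tendsto_self_mul_const_pow_of_lt_one ha ha1).const_mul K
  rw [mul_zero] at h
  refine squeeze_zero' (Eventually.of_forall fun n => by positivity) ?_ h
  filter_upwards [eventually_gt_atTop 0] with n hn
  have hn' : (1 : ℝ) ≤ n := by exact_mod_cast hn
  have h1 : (n : ℝ) ^ c1 ≤ n := by
    simpa using Real.rpow_le_rpow_of_exponent_le hn' hc.le
  calc s n * a ^ n ≤ (K * n) * a ^ n := by
        gcongr
        exact (hscale_s n).trans (by gcongr)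
    _ = _ := by ring

end scaling

lemma two_exp_lt_one : 2 * Real.exp (-(3 / 2)) < 1 := by
  have h : 3 / 2 + 1 ≤ Real.exp (3 / 2) := Real.add_one_le_exp _
  rw [Real.exp_neg, ← div_eq_mul_inv, div_lt_one (Real.exp_pos _)]
  linarith

/-- Corollary 3: under polynomial sparsity `s(n) ≤ K n^{c₁}` and (sub)exponential ambient
dimension `p(n) ≤ K exp(n^{c₂})` with `c₁ + c₂ < 1`, the Lasso recovers the sparsity
pattern with probability converging to one. -/
theorem lasso_gaussian_poly_exp_scaling
    (p s : ℕ → ℕ)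
    (hs_inf : Tendsto s atTop atTop)
    (hns_inf : Tendsto (fun n => n - s n) atTop atTop)
    (hps_inf : Tendsto (fun n => p n - s n) atTop atTop)
    (hsp : ∀ n, s n < p n)
    (Sig : ∀ n, Matrix (Fin (p n)) (Fin (p n)) ℝ)
    (hSigpd : ∀ n, (Sig n).PosDef) (hSigdiag : ∀ n i, Sig n i i = 1)
    (βstar : ∀ n, Fin (p n) → ℝ)
    (S : ∀ n, Finset (Fin (p n)))
    (hSsupp : ∀ n i, i ∈ S n ↔ βstar n i ≠ 0)
    (hScard : ∀ n, (S n).card = s n)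
    (Cmin Cmax Dmax ε : ℝ)
    (hCmin : 0 < Cmin) (hCmax : 0 < Cmax) (hε : 0 < ε) (hε1 : ε ≤ 1)
    (heigmin : ∀ n (x : {i : Fin (p n) // i ∈ S n} → ℝ),
      Cmin * ∑ i, x i ^ 2 ≤ x ⬝ᵥ (subSS (Sig n) (S n)).mulVec x)
    (heigmax : ∀ n (x : Fin (p n) → ℝ),
      x ⬝ᵥ (Sig n).mulVec x ≤ Cmax * ∑ i, x i ^ 2)
    (hDmax : ∀ n (i : {i : Fin (p n) // i ∈ S n}),
      ∑ j, |(subSS (Sig n) (S n))⁻¹ i j| ≤ Dmax)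
    (hinc : ∀ n (j : {i : Fin (p n) // i ∉ S n}),
      ∑ i, |(subScS (Sig n) (S n) * (subSS (Sig n) (S n))⁻¹) j i| ≤ 1 - ε)
    (Ω : ℕ → Type) (mΩ : ∀ n, MeasurableSpace (Ω n))
    (P : ∀ n, Measure (Ω n)) (hP : ∀ n, IsProbabilityMeasure (P n))
    (X : ∀ n, Ω n → Fin n → Fin (p n) → ℝ) (hXmeas : ∀ n, Measurable (X n))
    (hXlaw : ∀ n, HasIIDGaussianRows (P n) (X n) (Sig n))
    (σ2 : ℝ) (hσ2 : 0 < σ2)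
    (W : ∀ n, Ω n → Fin n → ℝ) (hWmeas : ∀ n, Measurable (W n))
    (hWlaw : ∀ n,
      Measure.map (W n) (P n) = Measure.pi (fun _ : Fin n => gaussianReal 0 σ2.toNNReal))
    (hindep : ∀ n, IndepFun (X n) (W n) (P n))
    (c1 c2 K : ℝ) (hc1 : 0 < c1) (hc2 : 0 < c2) (hc12 : c1 + c2 < 1)
    (hscale_s : ∀ n : ℕ, (s n : ℝ) ≤ K * (n : ℝ) ^ c1)
    (hscale_p : ∀ n : ℕ, (p n : ℝ) ≤ K * Real.exp ((n : ℝ) ^ c2))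
    (lam : ℕ → ℝ) (hlam : ∀ n, 0 < lam n)
    (hlam0 : Tendsto lam atTop (nhds 0))
    (hlam1 : Tendsto (fun n => n * lam n ^ 2 / Real.log ((p n : ℝ) - s n)) atTop atTop)
    (hlam2 : Tendsto (fun n =>
        (1 / ⨅ i : {i : Fin (p n) // i ∈ S n}, |βstar n i.1|) *
          (lam n + Real.sqrt (Real.log (s n) / n)))
      atTop (nhds 0)) :
    Tendsto (fun n => P n {ω | PropR (Matrix.of (X n ω)) (βstar n) (W n ω) (lam n)})
      atTop (nhds 1) := by
  have hc1' : c1 < 1 := by linarith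
  have hsS : ∀ n, ((S n).card : ℝ) = s n := fun n => by rw [hScard]
  have hsR : Tendsto (fun n => (s n : ℝ)) atTop atTop := tendsto_natCast_atTop_atTop.comp hs_inf
  have hpsR : Tendsto (fun n => (p n : ℝ) - s n) atTop atTop := by
    refine (tendsto_natCast_atTop_atTop.comp hps_inf).congr fun n => ?_
    simp [Nat.cast_sub (hsp n).le]
  have hK : 0 < K := by
    have h1 : (0 : ℝ) < p 0 := by exact_mod_cast (Nat.zero_le _).trans_lt (hsp 0)
    exact pos_of_mul_pos_left (h1.trans_le (hscale_p 0)) (Real.exp_pos _).le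
  set c0 := Cmin / 64 with hc0_def
  have hc0 : 0 < c0 := by positivity
  set ρ : ℕ → ℝ := fun n => ⨅ i : {i : Fin (p n) // i ∈ S n}, |βstar n i.1| with hρ_def
  have hρle : ∀ n (i : {i : Fin (p n) // i ∈ S n}), ρ n ≤ |βstar n i.1| := fun n i =>
    ciInf_le (Set.finite_range _).bddBelow i
  have hne : ∀ᶠ n in atTop, Nonempty {i : Fin (p n) // i ∈ S n} := by
    filter_upwards [hs_inf.eventually_gt_atTop 0] with n hn
    rw [← hScard, Finset.card_pos] at hn
    exact hn.to_subtype
  have hρpos : ∀ᶠ n in atTop, 0 < ρ n := by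
    filter_upwards [hne] with n hn
    obtain ⟨i, hi⟩ := exists_eq_ciInf_of_finite
      (f := fun i : {i : Fin (p n) // i ∈ S n} => |βstar n i.1|)
    have : |βstar n i.1| = ρ n := hi
    rw [← this]
    exact abs_pos.2 ((hSsupp n i.1).1 i.2)
  have hD : 0 ≤ Dmax := by
    obtain ⟨n, hn⟩ := hne.exists
    exact (Finset.sum_nonneg fun _ _ => abs_nonneg _).trans (hDmax n hn.some)
  -- the signal dominates both the regularization and the noise level
  have hsig : ∀ δ : ℝ, 0 < δ → ∀ᶠ n in atTop,
      lam n ≤ δ * ρ n ∧ Real.log (s n) / n ≤ (δ * ρ n) ^ 2 := by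
    intro δ hδ
    filter_upwards [hlam2.eventually_le_const hδ, hρpos] with n hn hp
    rw [one_div, inv_mul_le_iff₀ hp, mul_comm (ρ n)] at hn
    have h1 := Real.sqrt_nonneg (Real.log (s n) / n)
    have h2 := (hlam n).le
    exact ⟨by linarith, (Real.sqrt_le_left (by positivity)).1 (by linarith)⟩
  obtain ⟨L, hL1, hL2⟩ : ∃ L : ℕ, 2 ≤ (L : ℝ) ∧ 256 ≤ Cmin * (L : ℝ) ^ 2 := by
    obtain ⟨L, hL⟩ := exists_nat_ge (2 + 256 / Cmin)
    have h0 : 0 < 256 / Cmin := by positivity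
    refine ⟨L, by linarith, ?_⟩
    rw [← div_le_iff₀' hCmin]
    nlinarith
  have T1 := tendsto_grid hK hc1' hscale_s (L := L) (a := Real.exp 1 / 3) (by positivity)
    (by positivity) (by rw [div_lt_one (by norm_num)]; exact Real.exp_one_lt_three)
  have T2 := tendsto_s_mul_pow hK hc1' hscale_s (by positivity) two_exp_lt_one
  have T3 := tendsto_pow_atTop_nhds_zero_of_lt_one (by positivity) two_exp_lt_one
  have T4 : Tendsto (fun n => (s n : ℝ) *
      (2 * Real.exp (-((ρ n / 2) ^ 2 / (2 * σ2 * (1 / (c0 * n))))))) atTop (nhds 0) := by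
    refine tendsto_union_exp hsR ?_
    filter_upwards [hsig _ (show 0 < Real.sqrt (c0 / (16 * σ2)) by positivity),
      eventually_gt_atTop 0] with n hn hn0
    have hn' : (0 : ℝ) < n := by exact_mod_cast hn0
    have h := hn.2
    rw [mul_pow, Real.sq_sqrt (by positivity), div_le_iff₀ hn'] at h
    calc 2 * Real.log (s n) ≤ 2 * (c0 / (16 * σ2) * ρ n ^ 2 * n) := by linarith
      _ = _ := by field_simp; norm_num
  have T5 : Tendsto (fun n => (s n : ℝ) *
      (2 * Real.exp (-(1 ^ 2 / (2 * (Dmax + 1) * (s n / (c0 * n))))))) atTop (nhds 0) := by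
    refine tendsto_union_exp hsR ?_
    have h1 := tendsto_s_log hK hc1' hscale_s zero_le_one
    filter_upwards [h1.eventually_le_const (show 0 < c0 / (4 * (Dmax + 1)) by positivity),
      eventually_gt_atTop 0, hs_inf.eventually_gt_atTop 0] with n hn hn0 hs0
    have hn' : (0 : ℝ) < n := by exact_mod_cast hn0
    have hs' : (0 : ℝ) < s n := by exact_mod_cast hs0
    have h2 : Real.log (s n) ≤ Real.log (1 * s n + 1) := Real.log_le_log hs' (by linarith)
    rw [div_le_iff₀ hn', ← le_div_iff₀' hs'] at hn
    calc 2 * Real.log (s n) ≤ 2 * (c0 / (4 * (Dmax + 1)) * n / s n) := by linarith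
      _ = _ := by field_simp; norm_num
  have T6 : Tendsto (fun n => ((p n : ℝ) - s n) *
      (2 * Real.exp (-((n * lam n * ε) ^ 2 /
        (2 * 1 * (4 * n * σ2 + (n * lam n) ^ 2 * s n / (c0 * n))))))) atTop (nhds 0) := by
    refine tendsto_union_exp hpsR ?_
    have h1 := tendsto_s_log_p hK hc2 hc12 hpsR hscale_s hscale_p
    filter_upwards [h1.eventually_le_const (show 0 < c0 * ε ^ 2 / 8 by positivity),
      hlam1.eventually_ge_atTop (32 * σ2 / ε ^ 2), eventually_gt_atTop 0,
      hpsR.eventually_gt_atTop 1] with n hn hl hn0 hp1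
    have hn' : (0 : ℝ) < n := by exact_mod_cast hn0
    have hlog := Real.log_pos hp1
    have hlm := hlam n
    set ℓ := Real.log ((p n : ℝ) - s n)
    rw [div_le_iff₀ hn'] at hn
    rw [le_div_iff₀ hlog] at hl
    -- the noise and the bias each use up half of the exponent
    have e1 : 16 * σ2 * ℓ ≤ n * lam n ^ 2 * ε ^ 2 / 2 := by
      have := mul_le_mul_of_nonneg_right hl (show 0 ≤ ε ^ 2 / 2 by positivity)
      calc 16 * σ2 * ℓ = 32 * σ2 / ε ^ 2 * ℓ * (ε ^ 2 / 2) := by field_simp; norm_num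
        _ ≤ _ := by linarith
    have e2 : 4 * (s n * ℓ) * lam n ^ 2 / c0 ≤ n * lam n ^ 2 * ε ^ 2 / 2 := by
      rw [div_le_iff₀ hc0]
      have := mul_le_mul_of_nonneg_right hn (show 0 ≤ 4 * lam n ^ 2 by positivity)
      linarith
    rw [le_div_iff₀ (by positivity)]
    calc 2 * ℓ * (2 * 1 * (4 * n * σ2 + (n * lam n) ^ 2 * s n / (c0 * n)))
        = n * (16 * σ2 * ℓ + 4 * (s n * ℓ) * lam n ^ 2 / c0) := by field_simp; ring
      _ ≤ n * (n * lam n ^ 2 * ε ^ 2) := by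
          gcongr
          linarith
      _ = _ := by ring
  have hT := ((((T1.add T2).add T3).add T4).add T5).add T6
  simp only [add_zero] at hT
  have hfail : Tendsto (fun n => ENNReal.ofReal
      ((P n).real {ω | ¬ PropR (Matrix.of (X n ω)) (βstar n) (W n ω) (lam n)}))
      atTop (nhds 0) := by
    rw [← ENNReal.ofReal_zero]
    refine ENNReal.tendsto_ofReal (squeeze_zero' (Eventually.of_forall fun n => by positivity)
      ?_ hT)
    filter_upwards [hρpos, eventually_gt_atTop 0, hs_inf.eventually_gt_atTop 0,
      hsig (c0 / (2 * (Dmax + 1 + 1))) (by positivity)] with n hρn hn0 hs0 hbias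
    have hn' : (0 : ℝ) < n := by exact_mod_cast hn0
    have hs' : (1 : ℝ) ≤ s n := by exact_mod_cast hs0
    have hL0 : 0 < L := by
      have : (0 : ℝ) < L := by linarith
      exact_mod_cast this
    have hsym : ∀ i j, Sig n i j = Sig n j i := fun i j => by
      simpa using ((hSigpd n).isHermitian.apply i j).symm
    have := hP n
    have h := prob_failure hn0 (hXmeas n) (hXlaw n) (hWmeas n) hσ2 (hWlaw n)
      (hindep n) hsym (hSigdiag n) hCmin hε (heigmin n)
      (fun i => (hDmax n i).trans (le_add_of_nonneg_right zero_le_one)) (hinc n) (βstar n)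
      (hSsupp n) (hlam n) hρn.le (hρle n) (L * s n) (Nat.mul_pos hL0 hs0)
      (by rw [hsS]; push_cast; nlinarith [mul_le_mul hL1 hs' zero_le_one (by positivity : (0 : ℝ) ≤ L),
        mul_le_mul hL1 le_rfl (by positivity : (0 : ℝ) ≤ s n) (by positivity : (0 : ℝ) ≤ L)])
      (by
        rw [hsS]; push_cast
        nlinarith [mul_le_mul_of_nonneg_right hL2 (sq_nonneg (s n : ℝ))])
      (by
        have := hbias.1
        calc n * lam n * ((Dmax + 1 + 1) / (c0 * n)) = lam n * ((Dmax + 1 + 1) / c0) := by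
              field_simp
          _ ≤ c0 / (2 * (Dmax + 1 + 1)) * ρ n * ((Dmax + 1 + 1) / c0) := by gcongr
          _ = ρ n / 2 := by field_simp)
    rw [hScard] at h
    push_cast at h
    exact h
  have hlow := ENNReal.Tendsto.sub (tendsto_const_nhds (x := (1 : ENNReal))) hfail
    (Or.inl ENNReal.one_ne_top)
  rw [tsub_zero] at hlow
  refine tendsto_of_tendsto_of_tendsto_of_le_of_le hlow tendsto_const_nhds (fun n => ?_)
    (fun n => (measure_mono (Set.subset_univ _)).trans (hP n).measure_univ.le)
  have := hP n
  rw [ofReal_measureReal, tsub_le_iff_right]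
  calc (1 : ENNReal) = P n Set.univ := measure_univ.symm
    _ ≤ P n ({ω | PropR (Matrix.of (X n ω)) (βstar n) (W n ω) (lam n)} ∪
          {ω | ¬ PropR (Matrix.of (X n ω)) (βstar n) (W n ω) (lam n)}) :=
        measure_mono fun ω _ => em _
    _ ≤ _ := measure_union_le _ _
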